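/- arXiv:1505.00980 — 2 statements merged into one kernel-verified Lean document; each statement's English description precedes it below -/
import Mathlib

section
/- The family of laws {ℙ_x : x ∈ Σ} is Feller continuous: if (x_n) is a sequence in Σ converging to x ∈ Σ, then ℙ_{x_n} converges weakly to ℙ_x as probability measures on C(ℝ₊,Σ). -/
/-!
Weak convergence is obtained by the usual compactness and uniqueness argument: the solutions of the
martingale problem, over all starting points, form a tight set (`tight_solutions`); every weak
cluster point of `ℙ_{x_n}` solves the martingale problem (`martingale_limit`) and starts at `x`
(`startsAt_limit`), hence is `ℙ_x` by uniqueness.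

Tightness is the real issue, because the drift of the process is singular at the boundary of the
simplex, so the coordinates themselves are not admissible test functions. They are replaced by flat
functions: `C²` functions whose derivative along `v_j` vanishes near the face `x_j = 0`, for every
`j`. Flat functions belong to every class `𝓓_j` and are stable under powers, and each coordinate is
a uniform limit of flat functions on the simplex (`exists_flat`). To build them, let `a(x)` be the
coordinatewise least `a ≥ 0` such that all coordinates of `x - ∑ a_j v_j` are at least `ε`. The map
`x ↦ x - ∑ a_j(x) v_j` is a discrete obstacle problem (a Skorokhod reflection): it is continuous, it
is constant along `v_i` where `x_i < ε`, because there the `i`-th constraint is active, and it moves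
points of the simplex by `O(ε)` only. Mollifying its coordinates at a scale much smaller than `ε`
gives the flat functions. Irreducibility and the invariant measure enter through
`exists_comb_nonneg`: every vector of zero sum is a nonnegative combination of the `v_j` with
coefficients controlled by its norm.

For a flat `H`, the functions `𝔏H` and the carré du champ of `H` are bounded, and the chain rule
for `𝔏` applied to `H, H², H³, H⁴` yields `𝔼[(H(X_t) - H(X_s))²] ≤ K (t - s)` and then
`𝔼[(H(X_t) - H(X_s))⁴] ≤ K (t - s)²`, with constants that do not depend on the solution
(`second_moment`, `fourth_moment`). Dyadic chaining in the manner of Kolmogorov turns this into a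
modulus of continuity in probability, first for flat functions (`flat_modulus`) and then, by
approximation, for the paths (`path_modulus`); Arzelà–Ascoli gives tightness.

In the limit, the martingale identity is first tested against continuous functions measurable for
the past, then against the π-system of events whose indicators are pointwise limits of these, and
finally extended by Dynkin's π-λ theorem.
-/


open MeasureTheory Set
open scoped NNReal ENNReal

noncomputable section

variable {S : Type*} [Fintype S] [DecidableEq S]

/-- The generator of the underlying Markov chain. -/
def gen (r : S → S → ℝ) (f : S → ℝ) (j : S) : ℝ := ∑ k, r j k * (f k - f j)

/-- Irreducibility of the jump rates. -/
def IrreducibleRates (r : S → S → ℝ) : Prop :=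
  ∀ j k : S, j ≠ k → Relation.TransGen (fun a c => 0 < r a c) j k

/-- canonical basis vector of ℝ^S -/
def ebasis (j : S) : S → ℝ := Pi.single j 1

/-- the vectors v_j = Σ_k r(j,k)(e_k - e_j) -/
def vvec (r : S → S → ℝ) (j : S) : S → ℝ := ∑ k, r j k • (ebasis k - ebasis j)

/-- second directional derivative (∂_d)² H (x) -/
def secondD (H : (S → ℝ) → ℝ) (d x : S → ℝ) : ℝ :=
  fderiv ℝ (fun y => fderiv ℝ H y d) x d

/-- membership in the class 𝓓_j -/
def memD (r : S → S → ℝ) (j : S) (H : (S → ℝ) → ℝ) : Prop :=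
  ContDiff ℝ 2 H ∧
  ContinuousOn (fun x => if 0 < x j then fderiv ℝ H x (vvec r j) / x j else 0)
    (stdSimplex ℝ S)

/-- the operator 𝔏 -/
def Lop (r : S → S → ℝ) (m : S → ℝ) (b : ℝ) (H : (S → ℝ) → ℝ) (x : S → ℝ) : ℝ :=
  b * ∑ j, (if x j ≠ 0 then (m j / x j) * fderiv ℝ H x (vvec r j) else 0)
    + (1 / 2) * ∑ j, ∑ k, m j * r j k * secondD H (ebasis k - ebasis j) x

/-- the path space C(ℝ₊, Σ) -/
abbrev PathSp (S : Type*) [Fintype S] := C(ℝ≥0, ↥(stdSimplex ℝ S))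

instance : MeasurableSpace (PathSp S) := borel _

/-- the natural filtration 𝓕_t = σ(X_s : s ≤ t) -/
def filtr (S : Type*) [Fintype S] (t : ℝ≥0) : MeasurableSpace (PathSp S) :=
  ⨆ s ∈ Set.Iic t,
    MeasurableSpace.comap (fun ω : PathSp S => ((ω s : S → ℝ))) inferInstance

/-- the martingale property with respect to the natural filtration -/
def IsMartingale (μ : Measure (PathSp S)) (M : ℝ≥0 → PathSp S → ℝ) : Prop :=
  (∀ t, Integrable (M t) μ) ∧
  (∀ t, @Measurable _ _ (filtr S t) _ (M t)) ∧
  (∀ s t : ℝ≥0, s ≤ t → ∀ A : Set (PathSp S), MeasurableSet[filtr S s] A →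
    ∫ ω in A, M t ω ∂μ = ∫ ω in A, M s ω ∂μ)

/-- the process H(X_t) - ∫₀ᵗ (𝔏H)(X_s) ds -/
def martProc (r : S → S → ℝ) (m : S → ℝ) (b : ℝ) (H : (S → ℝ) → ℝ)
    (t : ℝ≥0) (ω : PathSp S) : ℝ :=
  H (ω t : S → ℝ) - ∫ s in Set.Icc (0:ℝ) (t:ℝ), Lop r m b H ((ω s.toNNReal : S → ℝ))

/-- μ is a solution of the 𝔏-martingale problem -/
def SolvesMP (r : S → S → ℝ) (m : S → ℝ) (b : ℝ) (μ : Measure (PathSp S)) : Prop :=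
  ∀ H : (S → ℝ) → ℝ, (∀ j : S, memD r j H) → IsMartingale μ (martProc r m b H)

/-- μ starts at x -/
def StartsAt (μ : Measure (PathSp S)) (x : S → ℝ) : Prop :=
  μ {ω : PathSp S | (ω 0 : S → ℝ) = x} = 1

set_option linter.unusedSectionVars false

/-! ### Linear algebra of the jump vectors -/

/-- The linear combination `∑ j, a j • v_j`. -/
def comb (r : S → S → ℝ) (a : S → ℝ) : S → ℝ := ∑ j, a j • vvec r j

lemma vvec_apply (r : S → S → ℝ) (j i : S) :
    vvec r j i = r j i - if i = j then ∑ k, r j k else 0 := by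
  simp only [vvec, ebasis, Finset.sum_apply, Pi.smul_apply, Pi.sub_apply, smul_eq_mul, mul_sub,
    Finset.sum_sub_distrib, Pi.single_apply]
  congr 1
  · simp
  · split_ifs <;> simp

lemma vvec_sum (r : S → S → ℝ) (j : S) : ∑ i, vvec r j i = 0 := by
  simp [vvec_apply]

lemma comb_add (r : S → S → ℝ) (a c : S → ℝ) : comb r (a + c) = comb r a + comb r c := by
  simp [comb, add_smul, Finset.sum_add_distrib]

lemma comb_smul (r : S → S → ℝ) (s : ℝ) (a : S → ℝ) : comb r (s • a) = s • comb r a := by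
  simp [comb, mul_smul, Finset.smul_sum]

lemma comb_single (r : S → S → ℝ) (i : S) (s : ℝ) : comb r (Pi.single i s) = s • vvec r i := by
  unfold comb
  rw [Finset.sum_eq_single i]
  · simp
  · intro j _ hj; simp [hj]
  · simp

lemma comb_sum_zero (r : S → S → ℝ) (a : S → ℝ) : ∑ i, comb r a i = 0 := by
  simp only [comb, Finset.sum_apply, Pi.smul_apply, smul_eq_mul]
  rw [Finset.sum_comm]
  simp [← Finset.mul_sum, vvec_sum]

lemma gen_eq (r : S → S → ℝ) (f : S → ℝ) (j : S) : gen r f j = ∑ i, f i * vvec r j i := by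
  simp only [gen, vvec_apply, mul_sub, Finset.sum_sub_distrib, mul_ite, mul_zero,
    Finset.sum_ite_eq', Finset.mem_univ, if_true]
  rw [← Finset.sum_mul, mul_comm (f j)]
  simp [mul_comm]

/-- The invariance of `m` says precisely that `∑ j, m_j v_j = 0`. -/
lemma comb_m (r : S → S → ℝ) (m : S → ℝ) (hinv : ∀ f : S → ℝ, ∑ j, m j * gen r f j = 0) :
    comb r m = 0 := by
  ext i
  have := hinv (Pi.single i 1)
  simp only [gen_eq, Pi.single_apply, ite_mul, one_mul, zero_mul, Finset.sum_ite_eq',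
    Finset.mem_univ, if_true] at this
  simpa [comb] using this

/-- Maximum principle: functions harmonic on all of `S` are constant. -/
lemma harmonic_const (r : S → S → ℝ) (hr : ∀ j k, 0 ≤ r j k) (hirr : IrreducibleRates r)
    (f : S → ℝ) (hf : ∀ j, gen r f j = 0) (i k : S) : f i = f k := by
  obtain ⟨j, -, hj⟩ := Finset.exists_max_image Finset.univ f ⟨i, Finset.mem_univ i⟩
  have step : ∀ a c, f a = f j → 0 < r a c → f c = f j := by
    intro a c ha hac
    have h0 := hf a
    unfold gen at h0
    rw [Finset.sum_eq_zero_iff_of_nonpos] at h0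
    · have := h0 c (Finset.mem_univ c)
      rcases mul_eq_zero.1 this with h | h
      · exact absurd h hac.ne'
      · linarith
    · intro l _
      have := hj l (Finset.mem_univ l)
      exact mul_nonpos_of_nonneg_of_nonpos (hr a l) (by linarith)
  have all : ∀ c, f c = f j := by
    intro c
    by_cases h : j = c
    · rw [h]
    · have hT := hirr j c h
      clear h
      induction hT with
      | single h => exact step _ _ rfl h
      | tail _ h ih => exact step _ _ ih h
  rw [all i, all k]

/-- The `v_j` span the hyperplane of vectors of zero sum: a linear functional vanishing on them is
harmonic, hence constant. -/
lemma exists_comb (r : S → S → ℝ) (hr : ∀ j k, 0 ≤ r j k) (hirr : IrreducibleRates r)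
    (w : S → ℝ) (hw : ∑ i, w i = 0) : ∃ c, comb r c = w := by
  let V : (S → ℝ) →ₗ[ℝ] (S → ℝ) :=
    { toFun := comb r, map_add' := comb_add r, map_smul' := comb_smul r }
  by_contra hcon
  have hnot : w ∉ LinearMap.range V := by
    rintro ⟨c, hc⟩; exact hcon ⟨c, hc⟩
  obtain ⟨φ, hφw, hφ⟩ := Submodule.exists_le_ker_of_notMem hnot
  have hrep : ∀ z : S → ℝ, φ z = ∑ i, φ (Pi.single i 1) * z i := by
    intro z
    conv_lhs => rw [LinearMap.pi_apply_eq_sum_univ φ z]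
    refine Finset.sum_congr rfl fun i _ => ?_
    rw [smul_eq_mul, mul_comm]
    congr 2
    ext j; simp [Pi.single_apply, eq_comm]
  have hh : ∀ j, gen r (fun i => φ (Pi.single i 1)) j = 0 := by
    intro j
    rw [gen_eq, ← hrep]
    have : V (Pi.single j 1) = vvec r j := by
      change comb r (Pi.single j 1) = _
      rw [comb_single, one_smul]
    have h2 := hφ ⟨_, this⟩
    simpa using h2
  apply hφw
  rw [hrep w]
  rcases isEmpty_or_nonempty S with h | ⟨⟨i0⟩⟩
  · simp
  · rw [Finset.sum_congr rfl fun i _ => by rw [harmonic_const r hr hirr _ hh i i0],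
      ← Finset.mul_sum, hw, mul_zero]

/-- Every vector of zero sum is a combination of the `v_j` with *nonnegative* coefficients of
comparable size: adding a multiple of `m` to the coefficients changes nothing. -/
lemma exists_comb_nonneg (r : S → S → ℝ) (hr : ∀ j k, 0 ≤ r j k) (hirr : IrreducibleRates r)
    (m : S → ℝ) (hm : ∀ j, 0 < m j) (hinv : ∀ f : S → ℝ, ∑ j, m j * gen r f j = 0) :
    ∃ C : ℝ, 0 ≤ C ∧ ∀ w : S → ℝ, ∑ i, w i = 0 →
      ∃ c : S → ℝ, (∀ j, 0 ≤ c j) ∧ (∀ j, c j ≤ C * ‖w‖) ∧ comb r c = w := by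
  rcases isEmpty_or_nonempty S with h | ⟨⟨i0⟩⟩
  · exact ⟨0, le_rfl, fun w _ => ⟨0, fun j => le_rfl, fun j => by simp, Subsingleton.elim _ _⟩⟩
  have hb : ∀ i, ∃ c, comb r c = Pi.single i 1 - Pi.single i0 1 := fun i =>
    exists_comb r hr hirr _ (by simp)
  choose B hB using hb
  set D : ℝ := ∑ j, ∑ i, |B i j| with hD
  set E : ℝ := ∑ j, D / m j with hE
  have hD0 : 0 ≤ D := by positivity
  have hDm : ∀ j, 0 ≤ D / m j := fun j => div_nonneg hD0 (hm j).le
  have hE0 : 0 ≤ E := Finset.sum_nonneg fun j _ => hDm j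
  have hEm : ∀ j, D ≤ E * m j := by
    intro j
    have : D / m j ≤ E := Finset.single_le_sum (fun j _ => hDm j) (Finset.mem_univ j)
    rwa [div_le_iff₀ (hm j)] at this
  have hM0 : 0 ≤ ∑ j, m j := Finset.sum_nonneg fun j _ => (hm j).le
  refine ⟨D + E * ∑ j, m j, by positivity, fun w hw => ?_⟩
  have hbd : ∀ j, |∑ i, w i * B i j| ≤ D * ‖w‖ := by
    intro j
    calc |∑ i, w i * B i j| ≤ ∑ i, |w i * B i j| := Finset.abs_sum_le_sum_abs _ _
      _ ≤ ∑ i, |B i j| * ‖w‖ := by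
        refine Finset.sum_le_sum fun i _ => ?_
        rw [abs_mul, mul_comm]
        exact mul_le_mul_of_nonneg_left (norm_le_pi_norm w i) (abs_nonneg _)
      _ = (∑ i, |B i j|) * ‖w‖ := by rw [Finset.sum_mul]
      _ ≤ D * ‖w‖ := by
        refine mul_le_mul_of_nonneg_right ?_ (norm_nonneg _)
        exact Finset.single_le_sum (f := fun j => ∑ i, |B i j|)
          (fun j _ => by positivity) (Finset.mem_univ j)
  refine ⟨(fun j => ∑ i, w i * B i j) + (E * ‖w‖) • m, fun j => ?_, fun j => ?_, ?_⟩
  · have h1 := neg_le_of_abs_le (hbd j)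
    have h2 := mul_le_mul_of_nonneg_right (hEm j) (norm_nonneg w)
    simp only [Pi.add_apply, Pi.smul_apply, smul_eq_mul]
    nlinarith
  · have h1 := le_of_abs_le (hbd j)
    have h2 : m j ≤ ∑ j, m j := Finset.single_le_sum (fun j _ => (hm j).le) (Finset.mem_univ j)
    have h3 := mul_le_mul_of_nonneg_left h2 (mul_nonneg hE0 (norm_nonneg w))
    simp only [Pi.add_apply, Pi.smul_apply, smul_eq_mul]
    nlinarith
  · rw [comb_add, comb_smul, comb_m r m hinv, smul_zero, add_zero]
    have : (fun j => ∑ i, w i * B i j) = ∑ i, w i • B i := by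
      ext j; simp
    have h2 : ∀ s : Finset S, comb r (∑ i ∈ s, w i • B i) = ∑ i ∈ s, w i • comb r (B i) := by
      intro s
      induction s using Finset.induction_on with
      | empty => simp [comb]
      | insert a s ha ih => rw [Finset.sum_insert ha, Finset.sum_insert ha, comb_add, comb_smul, ih]
    rw [this, h2]
    ext k
    simp only [hB, Finset.sum_apply, Pi.smul_apply, Pi.sub_apply, smul_eq_mul, mul_sub,
      Finset.sum_sub_distrib, ← Finset.sum_mul, hw, zero_mul, sub_zero]
    simp [Pi.single_apply]

/-! ### Reflection of the simplex away from its faces -/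

/-- Affine projection of `ℝ^S` onto the hyperplane `∑ x_i = 1`. -/
def hypProj (x : S → ℝ) : S → ℝ := fun i => x i + (1 - ∑ k, x k) / (Fintype.card S : ℝ)

/-- Nonnegative amounts `a` such that moving the projection of `x` by `-∑ j, a j • v_j` brings all
coordinates above `ε`. -/
def feas (r : S → S → ℝ) (ε : ℝ) (x : S → ℝ) : Set (S → ℝ) :=
  {a | (∀ j, 0 ≤ a j) ∧ ∀ i, ε ≤ hypProj x i - comb r a i}

/-- The coordinatewise infimum of `feas`. -/
def leastPush (r : S → S → ℝ) (ε : ℝ) (x : S → ℝ) : S → ℝ :=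
  fun j => sInf ((fun a => a j) '' feas r ε x)

/-- The point reached from `x` after subtracting the least amounts of the vectors `v_j`. -/
def reflMap (r : S → S → ℝ) (ε : ℝ) (x : S → ℝ) : S → ℝ :=
  hypProj x - comb r (leastPush r ε x)

lemma hypProj_sum [Nonempty S] (x : S → ℝ) : ∑ i, hypProj x i = 1 := by
  have : (Fintype.card S : ℝ) ≠ 0 := by positivity
  simp only [hypProj, Finset.sum_add_distrib, Finset.sum_const, Finset.card_univ, nsmul_eq_mul]
  field_simp
  ring

lemma hypProj_of_sum (x : S → ℝ) (h : ∑ i, x i = 1) : hypProj x = x := by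
  ext i; simp [hypProj, h]

lemma hypProj_continuous : Continuous (hypProj (S := S)) := by
  unfold hypProj; fun_prop

lemma hypProj_add_smul (r : S → S → ℝ) (x : S → ℝ) (s : ℝ) (j : S) :
    hypProj (x + s • vvec r j) = hypProj x + s • vvec r j := by
  ext i
  simp [hypProj, Finset.sum_add_distrib, ← Finset.mul_sum, vvec_sum]
  ring

lemma feas_bddBelow (r : S → S → ℝ) (ε : ℝ) (x : S → ℝ) (j : S) :
    BddBelow ((fun a => a j) '' feas r ε x) :=
  ⟨0, by rintro _ ⟨a, ha, rfl⟩; exact ha.1 j⟩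

/-- The properties of the constant in `exists_comb_nonneg`. -/
def CombBound (r : S → S → ℝ) (C : ℝ) : Prop :=
  0 ≤ C ∧ ∀ w : S → ℝ, ∑ i, w i = 0 →
      ∃ c : S → ℝ, (∀ j, 0 ≤ c j) ∧ (∀ j, c j ≤ C * ‖w‖) ∧ comb r c = w

lemma feas_nonempty [Nonempty S] {r : S → S → ℝ} {C : ℝ} (hC : CombBound r C) {ε : ℝ}
    (hε : ε ≤ 1 / (Fintype.card S : ℝ)) (x : S → ℝ) : (feas r ε x).Nonempty := by
  have hn : (Fintype.card S : ℝ) ≠ 0 := by positivity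
  obtain ⟨c, hc0, -, hc⟩ := hC.2 (fun i => hypProj x i - 1 / (Fintype.card S : ℝ)) (by
    rw [Finset.sum_sub_distrib, hypProj_sum]
    simp [hn])
  refine ⟨c, hc0, fun i => ?_⟩
  rw [hc]; simpa using hε

/-- The least amounts are Lipschitz: a nonnegative combination equal to the displacement can be
added to any feasible vector. -/
lemma leastPush_lip [Nonempty S] {r : S → S → ℝ} {C : ℝ} (hC : CombBound r C) {ε : ℝ}
    (hε : ε ≤ 1 / (Fintype.card S : ℝ)) (x x' : S → ℝ) (j : S) :
    leastPush r ε x' j ≤ leastPush r ε x j + C * ‖hypProj x' - hypProj x‖ := by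
  obtain ⟨c, hc0, hcb, hc⟩ := hC.2 (hypProj x' - hypProj x) (by
    simp [Finset.sum_sub_distrib, hypProj_sum])
  rw [← sub_le_iff_le_add]
  refine le_csInf ((feas_nonempty hC hε x).image _) ?_
  rintro _ ⟨a, ha, rfl⟩
  have hmem : a + c ∈ feas r ε x' := by
    refine ⟨fun i => add_nonneg (ha.1 i) (hc0 i), fun i => ?_⟩
    have := ha.2 i
    rw [comb_add, hc]
    simp only [Pi.add_apply, Pi.sub_apply]
    linarith
  have h1 : leastPush r ε x' j ≤ (a + c) j := csInf_le (feas_bddBelow r ε x' j) ⟨_, hmem, rfl⟩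
  have h2 := hcb j
  simp only [Pi.add_apply] at h1
  linarith

lemma leastPush_nonneg (r : S → S → ℝ) (ε : ℝ) (x : S → ℝ) (j : S) : 0 ≤ leastPush r ε x j :=
  Real.sInf_nonneg (by rintro _ ⟨a, ha, rfl⟩; exact ha.1 j)

/-- On the simplex the reflection moves points by `O(ε)` only: mixing `x` with the uniform
vector gives a point with coordinates `≥ ε` at distance `O(ε)`. -/
lemma leastPush_le [Nonempty S] {r : S → S → ℝ} {C : ℝ} (hC : CombBound r C) {ε : ℝ} (hε0 : 0 ≤ ε)
    (hε : ε ≤ 1 / (Fintype.card S : ℝ)) (x : S → ℝ) (hx : x ∈ stdSimplex ℝ S) (j : S) :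
    leastPush r ε x j ≤ C * ((Fintype.card S : ℝ) * ε) := by
  have hn : (0 : ℝ) < Fintype.card S := by positivity
  have hn1 : (1 : ℝ) ≤ Fintype.card S := by exact_mod_cast Fintype.card_pos (α := S)
  have hxle : ∀ i, x i ≤ 1 := fun i => by
    rw [← hx.2]; exact Finset.single_le_sum (fun k _ => hx.1 k) (Finset.mem_univ i)
  set w : S → ℝ := fun i => ε * (Fintype.card S * x i - 1) with hw
  have hws : ∑ i, w i = 0 := by
    simp [hw, ← Finset.mul_sum, Finset.sum_sub_distrib, hx.2]
  have hwn : ‖w‖ ≤ Fintype.card S * ε := by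
    refine (pi_norm_le_iff_of_nonneg (by positivity)).2 fun i => ?_
    rw [hw, Real.norm_eq_abs, abs_mul, abs_of_nonneg hε0, mul_comm]
    refine mul_le_mul_of_nonneg_right (abs_le.2 ⟨?_, ?_⟩) hε0
    · have := mul_nonneg hn.le (hx.1 i); linarith
    · have := mul_le_mul_of_nonneg_left (hxle i) hn.le; linarith
  obtain ⟨c, hc0, hcb, hc⟩ := hC.2 w hws
  -- `x - w` is the mixture of `x` and the uniform vector with coordinates at least `ε`
  have hmem : c ∈ feas r ε x := by
    refine ⟨hc0, fun i => ?_⟩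
    rw [hypProj_of_sum x hx.2, hc]
    have h1 : ε * Fintype.card S ≤ 1 := by rwa [le_div_iff₀ hn] at hε
    have := mul_le_mul_of_nonneg_right h1 (hx.1 i)
    simp only [hw]
    linarith
  calc leastPush r ε x j ≤ c j := csInf_le (feas_bddBelow r ε x j) ⟨_, hmem, rfl⟩
    _ ≤ C * ‖w‖ := hcb j
    _ ≤ _ := mul_le_mul_of_nonneg_left hwn hC.1

lemma reflMap_continuous [Nonempty S] {r : S → S → ℝ} {C : ℝ} (hC : CombBound r C) {ε : ℝ}
    (hε : ε ≤ 1 / (Fintype.card S : ℝ)) : Continuous (reflMap r ε) := by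
  have hpush : Continuous (leastPush r ε) := by
    refine continuous_pi fun j => continuous_iff_continuousAt.2 fun x => ?_
    rw [ContinuousAt, tendsto_iff_norm_sub_tendsto_zero]
    have h0 : Filter.Tendsto (fun x' => C * ‖hypProj x' - hypProj x‖) (nhds x) (nhds 0) := by
      have : Continuous (fun x' => C * ‖hypProj x' - hypProj x‖) := by
        have := hypProj_continuous (S := S)
        fun_prop
      simpa using this.tendsto x
    refine squeeze_zero (fun _ => norm_nonneg _) (fun x' => ?_) h0
    rw [Real.norm_eq_abs, abs_le]
    have h1 := leastPush_lip hC hε x x' j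
    have h2 := leastPush_lip hC hε x' x j
    rw [norm_sub_rev] at h2
    constructor <;> linarith
  unfold reflMap comb
  have := hypProj_continuous (S := S)
  fun_prop

/-- Moving by `s • v_i` raises the least amounts by at most `s` in the `i`-th coordinate, for either
sign of `s`, provided the endpoint violates the `i`-th constraint. -/
lemma leastPush_shift_le [Nonempty S] {r : S → S → ℝ} (hr : ∀ j k, 0 ≤ r j k) {C : ℝ}
    (hC : CombBound r C) {ε : ℝ}
    (hε : ε ≤ 1 / (Fintype.card S : ℝ)) (x : S → ℝ) (s : ℝ) (i : S)
    (h' : hypProj (x + s • vvec r i) i < ε) (j : S) :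
    leastPush r ε (x + s • vvec r i) j ≤ leastPush r ε x j + (Pi.single i s : S → ℝ) j := by
  rw [← sub_le_iff_le_add]
  refine le_csInf ((feas_nonempty hC hε x).image _) ?_
  rintro _ ⟨a, ha, rfl⟩
  have hcon : ∀ k, ε ≤ hypProj (x + s • vvec r i) k - comb r (a + Pi.single i s) k := by
    intro k
    have := ha.2 k
    rw [hypProj_add_smul, comb_add, comb_single]
    simp only [Pi.add_apply]
    linarith
  -- the `i`-th constraint alone forces the `i`-th amount to be positive
  have hpos : 0 ≤ (a + Pi.single i s : S → ℝ) i := by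
    set a' := a + Pi.single i s with ha'
    by_contra hneg
    push Not at hneg
    have h1 := hcon i
    have h2 : 0 ≤ comb r a' i := by
      simp only [comb, Finset.sum_apply, Pi.smul_apply, smul_eq_mul]
      refine Finset.sum_nonneg fun l _ => ?_
      by_cases hl : l = i
      · subst hl
        refine mul_nonneg_of_nonpos_of_nonpos hneg.le ?_
        rw [vvec_apply, if_pos rfl, sub_nonpos]
        exact Finset.single_le_sum (fun k _ => hr l k) (Finset.mem_univ l)
      · refine mul_nonneg ?_ ?_
        · simpa [ha', hl] using ha.1 l
        · rw [vvec_apply, if_neg (Ne.symm hl), sub_zero]; exact hr l i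
    linarith
  have hmem : a + Pi.single i s ∈ feas r ε (x + s • vvec r i) := by
    refine ⟨fun l => ?_, hcon⟩
    by_cases hl : l = i
    · rw [hl]; exact hpos
    · simpa [hl] using ha.1 l
  have h1 : leastPush r ε (x + s • vvec r i) j ≤ (a + Pi.single i s : S → ℝ) j :=
    csInf_le (feas_bddBelow r ε _ j) ⟨_, hmem, rfl⟩
  simp only [Pi.add_apply] at h1
  linarith

/-- The reflection is constant along `v_i` in the region where the `i`-th coordinate is below
`ε`. -/
lemma reflMap_shift [Nonempty S] {r : S → S → ℝ} (hr : ∀ j k, 0 ≤ r j k) {C : ℝ}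
    (hC : CombBound r C) {ε : ℝ}
    (hε : ε ≤ 1 / (Fintype.card S : ℝ)) (x : S → ℝ) (s : ℝ) (i : S)
    (h : hypProj x i < ε) (h' : hypProj (x + s • vvec r i) i < ε) :
    reflMap r ε (x + s • vvec r i) = reflMap r ε x := by
  have hback : x + s • vvec r i + (-s) • vvec r i = x := by simp
  have key : leastPush r ε (x + s • vvec r i) = leastPush r ε x + Pi.single i s := by
    ext j
    refine le_antisymm (leastPush_shift_le hr hC hε x s i h' j) ?_
    have := leastPush_shift_le hr hC hε (x + s • vvec r i) (-s) i (by rwa [hback]) j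
    rw [hback, Pi.single_neg] at this
    simp only [Pi.add_apply, Pi.neg_apply] at this ⊢
    linarith
  unfold reflMap
  rw [key, hypProj_add_smul, comb_add, comb_single]
  abel

/-! ### Smooth functions that are flat along `v_j` near the face `x_j = 0` -/

/-- `H` is `C²` and, on the simplex and near the face `x_j = 0`, constant to first order in the
direction `v_j`. Such functions form an algebra contained in `⋂ j, 𝓓_j`. -/
def Flat (r : S → S → ℝ) (H : (S → ℝ) → ℝ) : Prop :=
  ContDiff ℝ 2 H ∧ ∃ ε > 0, ∀ x ∈ stdSimplex ℝ S, ∀ j, x j < ε → fderiv ℝ H x (vvec r j) = 0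

/-- Mollifying `reflMap` gives flat functions that are uniformly close to the coordinates. -/
lemma exists_flat [Nonempty S] {r : S → S → ℝ} (hr : ∀ j k, 0 ≤ r j k) {C : ℝ}
    (hC : CombBound r C) (k : S) {η : ℝ} (hη : 0 < η) :
    ∃ G : (S → ℝ) → ℝ, Flat r G ∧ ∀ x ∈ stdSimplex ℝ S, |G x - x k| ≤ η := by
  have hn : (0 : ℝ) < Fintype.card S := by positivity
  set W : ℝ := ∑ j, |vvec r j k| with hW
  have hW0 : 0 ≤ W := by positivity
  have hK0 : 0 ≤ C * Fintype.card S * W := by have := hC.1; positivity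
  obtain ⟨ε, hε0, hε, hεη⟩ : ∃ ε : ℝ, 0 < ε ∧ ε ≤ 1 / (Fintype.card S : ℝ) ∧
      C * Fintype.card S * W * ε ≤ η / 2 := by
    refine ⟨min (1 / (Fintype.card S : ℝ)) (η / 2 / (C * Fintype.card S * W + 1)), by positivity,
      min_le_left _ _, ?_⟩
    calc _ ≤ (C * Fintype.card S * W + 1) * (η / 2 / (C * Fintype.card S * W + 1)) := by
          apply mul_le_mul (by linarith) (min_le_right _ _) (by positivity) (by positivity)
      _ = η / 2 := by field_simp
  set Y : (S → ℝ) → ℝ := fun x => reflMap r ε x k with hY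
  have hYc : Continuous Y := (continuous_apply k).comp (reflMap_continuous hC hε)
  have hYx : ∀ x ∈ stdSimplex ℝ S, |Y x - x k| ≤ η / 2 := by
    intro x hx
    have : Y x - x k = - ∑ j, leastPush r ε x j * vvec r j k := by
      simp [hY, reflMap, hypProj_of_sum x hx.2, comb]
    rw [this, abs_neg]
    calc _ ≤ ∑ j, |leastPush r ε x j * vvec r j k| := Finset.abs_sum_le_sum_abs _ _
      _ ≤ ∑ j, C * (Fintype.card S * ε) * |vvec r j k| := by
        refine Finset.sum_le_sum fun j _ => ?_
        rw [abs_mul, abs_of_nonneg (leastPush_nonneg r ε x j)]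
        exact mul_le_mul_of_nonneg_right (leastPush_le hC hε0.le hε x hx j) (abs_nonneg _)
      _ = C * Fintype.card S * W * ε := by rw [← Finset.mul_sum]; ring
      _ ≤ _ := hεη
  -- uniform continuity of `Y` near the simplex gives the mollification scale
  obtain ⟨δ, hδ0, hδε, hδ⟩ : ∃ δ > 0, δ ≤ ε / 8 ∧ ∀ x ∈ stdSimplex ℝ S, ∀ y, dist y x < δ →
      dist (Y y) (Y x) ≤ η / 2 := by
    have hcomp : IsCompact (Metric.cthickening 1 (stdSimplex ℝ S)) :=
      (isCompact_stdSimplex ℝ S).cthickening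
    have huc := hcomp.uniformContinuousOn_of_continuous hYc.continuousOn
    obtain ⟨δ, hδ0, hδ⟩ := Metric.uniformContinuousOn_iff.1 huc (η / 2) (by positivity)
    refine ⟨min (min δ 1) (ε / 8), by positivity, min_le_right _ _, fun x hx y hy => ?_⟩
    have hy1 : dist y x < 1 := hy.trans_le ((min_le_left _ _).trans (min_le_right _ _))
    have hyδ : dist y x < δ := hy.trans_le ((min_le_left _ _).trans (min_le_left _ _))
    exact (hδ y (Metric.mem_cthickening_of_dist_le y x 1 _ hx hy1.le) x
      (Metric.self_subset_cthickening _ hx) hyδ).le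
  let φ : ContDiffBump (0 : S → ℝ) := ⟨δ / 2, δ, by positivity, by linarith⟩
  set G : (S → ℝ) → ℝ :=
    convolution (φ.normed volume) Y (ContinuousLinearMap.lsmul ℝ ℝ) volume with hG
  have hGs : ContDiff ℝ 2 G := by
    refine HasCompactSupport.contDiff_convolution_left (n := 2) _ φ.hasCompactSupport_normed ?_
      hYc.locallyIntegrable
    exact φ.contDiff_normed
  refine ⟨G, ⟨hGs, ε / 4, by positivity, fun x hx j hj => ?_⟩, fun x hx => ?_⟩
  · have hev : (fun s : ℝ => G (x + s • vvec r j)) =ᶠ[nhds 0] fun _ => G x := by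
      have hcs : Filter.Tendsto (fun s : ℝ => |s| * ‖vvec r j‖) (nhds 0) (nhds 0) := by
        have : Continuous (fun s : ℝ => |s| * ‖vvec r j‖) := by fun_prop
        simpa using this.tendsto 0
      filter_upwards [hcs.eventually (gt_mem_nhds (show (0 : ℝ) < ε / 4 by positivity))] with s hs
      simp only [hG, convolution_def]
      refine integral_congr_ae (Filter.Eventually.of_forall fun t => ?_)
      simp only [ContinuousLinearMap.lsmul_apply, smul_eq_mul]
      by_cases ht : t ∈ Metric.ball (0 : S → ℝ) δ
      · have htn : ‖t‖ < δ := by simpa using ht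
        have htk : ∀ i, |t i| ≤ δ := fun i => (norm_le_pi_norm t i).trans htn.le
        have hsum : |∑ i, t i| ≤ Fintype.card S * δ := by
          calc _ ≤ ∑ i, |t i| := Finset.abs_sum_le_sum_abs _ _
            _ ≤ ∑ _i : S, δ := Finset.sum_le_sum fun i _ => htk i
            _ = _ := by simp
        have hp : hypProj (x - t) j ≤ x j + 2 * δ := by
          have h3 : (1 - ∑ i, (x - t) i) / (Fintype.card S : ℝ) ≤ δ := by
            rw [div_le_iff₀ hn]
            simp only [Pi.sub_apply, Finset.sum_sub_distrib, hx.2]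
            have := le_of_abs_le hsum
            linarith
          have h4 := neg_le_of_abs_le (htk j)
          simp only [hypProj, Pi.sub_apply] at h3 ⊢
          linarith
        have hv : s * vvec r j j ≤ |s| * ‖vvec r j‖ := by
          calc s * vvec r j j ≤ |s * vvec r j j| := le_abs_self _
            _ ≤ _ := by
              rw [abs_mul]
              exact mul_le_mul_of_nonneg_left (norm_le_pi_norm (vvec r j) j) (abs_nonneg _)
        have := reflMap_shift hr hC hε (x - t) s j (by linarith) (by
          rw [hypProj_add_smul]
          simp only [Pi.add_apply, Pi.smul_apply, smul_eq_mul]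
          linarith)
        have e : x + s • vvec r j - t = x - t + s • vvec r j := by abel
        simp only [hY]
        rw [e, this]
      · have h0 : φ.normed volume t = 0 := by
          rw [← Function.notMem_support, φ.support_normed_eq]
          exact ht
        rw [h0, zero_mul, zero_mul]
    have hd : HasFDerivAt G (fderiv ℝ G x) (x + (0 : ℝ) • vvec r j) := by
      rw [zero_smul, add_zero]
      exact (hGs.differentiable (by norm_num) x).hasFDerivAt
    have hline : HasDerivAt (fun s : ℝ => x + s • vvec r j) (vvec r j) 0 := by
      simpa using ((hasDerivAt_id (0 : ℝ)).smul_const (vvec r j)).const_add x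
    have h1 := hd.comp_hasDerivAt (0 : ℝ) hline
    exact h1.unique ((hasDerivAt_const (0 : ℝ) (G x)).congr_of_eventuallyEq hev)
  · have h1 : dist (G x) (Y x) ≤ η / 2 :=
      φ.dist_normed_convolution_le hYc.aestronglyMeasurable fun y hy => hδ x hx y hy
    rw [Real.dist_eq] at h1
    calc |G x - x k| = |(G x - Y x) + (Y x - x k)| := by ring_nf
      _ ≤ |G x - Y x| + |Y x - x k| := abs_add_le _ _
      _ ≤ η := by linarith [hYx x hx]

/-! ### Calculus of the operator -/

/-- The carré du champ of the operator `Lop`. -/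
def carre (r : S → S → ℝ) (m : S → ℝ) (H : (S → ℝ) → ℝ) (x : S → ℝ) : ℝ :=
  ∑ j, ∑ k, m j * r j k * (fderiv ℝ H x (ebasis k - ebasis j)) ^ 2

lemma differentiable_fderiv_apply {H : (S → ℝ) → ℝ} (hH : ContDiff ℝ 2 H) (d : S → ℝ) :
    ContDiff ℝ 1 (fun y => fderiv ℝ H y d) :=
  (hH.fderiv_right (m := 1) (by norm_num)).clm_apply contDiff_const

lemma secondD_continuous {H : (S → ℝ) → ℝ} (hH : ContDiff ℝ 2 H) (d : S → ℝ) :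
    Continuous (secondD H d) :=
  ((differentiable_fderiv_apply hH d).continuous_fderiv (by norm_num)).clm_apply continuous_const

lemma fderiv_apply_continuous {H : (S → ℝ) → ℝ} (hH : ContDiff ℝ 2 H) (d : S → ℝ) :
    Continuous (fun y => fderiv ℝ H y d) :=
  (differentiable_fderiv_apply hH d).continuous

lemma carre_continuous (r : S → S → ℝ) (m : S → ℝ) {H : (S → ℝ) → ℝ} (hH : ContDiff ℝ 2 H) :
    Continuous (carre r m H) := by
  unfold carre
  exact continuous_finsetSum _ fun j _ => continuous_finsetSum _ fun k _ =>
    continuous_const.mul ((fderiv_apply_continuous hH _).pow 2)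

lemma fderiv_comp_apply {H : (S → ℝ) → ℝ} (hH : ContDiff ℝ 2 H) {φ φ' : ℝ → ℝ}
    (h1 : ∀ t, HasDerivAt φ (φ' t) t) (y d : S → ℝ) :
    fderiv ℝ (fun z => φ (H z)) y d = φ' (H y) * fderiv ℝ H y d := by
  have hd : HasFDerivAt H (fderiv ℝ H y) y := (hH.differentiable (by norm_num) y).hasFDerivAt
  have := (h1 (H y)).comp_hasFDerivAt y hd
  rw [show (fun z => φ (H z)) = φ ∘ H from rfl, this.fderiv]
  simp

lemma secondD_comp {H : (S → ℝ) → ℝ} (hH : ContDiff ℝ 2 H) {φ φ' φ'' : ℝ → ℝ}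
    (h1 : ∀ t, HasDerivAt φ (φ' t) t) (h2 : ∀ t, HasDerivAt φ' (φ'' t) t) (x d : S → ℝ) :
    secondD (fun z => φ (H z)) d x
      = φ' (H x) * secondD H d x + φ'' (H x) * (fderiv ℝ H x d) ^ 2 := by
  unfold secondD
  have e : (fun y => fderiv ℝ (fun z => φ (H z)) y d) = fun y => φ' (H y) * fderiv ℝ H y d := by
    ext y; exact fderiv_comp_apply hH h1 y d
  have hd : HasFDerivAt H (fderiv ℝ H x) x := (hH.differentiable (by norm_num) x).hasFDerivAt
  have hA := (h2 (H x)).comp_hasFDerivAt x hd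
  have hB := ((differentiable_fderiv_apply hH d).differentiable (by norm_num) x).hasFDerivAt
  have := hA.mul hB
  rw [e, show (fun y => φ' (H y) * fderiv ℝ H y d) = (φ' ∘ H) * (fun y => fderiv ℝ H y d) from rfl,
    this.fderiv]
  simp
  ring

/-- Chain rule for the diffusion operator. -/
lemma Lop_comp (r : S → S → ℝ) (m : S → ℝ) (b : ℝ) {H : (S → ℝ) → ℝ} (hH : ContDiff ℝ 2 H)
    {φ φ' φ'' : ℝ → ℝ}
    (h1 : ∀ t, HasDerivAt φ (φ' t) t) (h2 : ∀ t, HasDerivAt φ' (φ'' t) t) (x : S → ℝ) :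
    Lop r m b (fun z => φ (H z)) x
      = φ' (H x) * Lop r m b H x + (1 / 2) * φ'' (H x) * carre r m H x := by
  unfold Lop carre
  simp only [fderiv_comp_apply hH h1, secondD_comp hH h1 h2, mul_add, Finset.mul_sum,
    Finset.sum_add_distrib, add_assoc]
  refine congrArg₂ (· + ·) ?_ (congrArg₂ (· + ·) ?_ ?_)
  · refine Finset.sum_congr rfl fun j _ => ?_
    split_ifs <;> ring
  all_goals
    refine Finset.sum_congr rfl fun j _ => Finset.sum_congr rfl fun k _ => ?_
    ring

lemma Lop_continuousOn (r : S → S → ℝ) (m : S → ℝ) (b : ℝ) {H : (S → ℝ) → ℝ}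
    (hH : ContDiff ℝ 2 H) (hD : ∀ j, memD r j H) :
    ContinuousOn (Lop r m b H) (stdSimplex ℝ S) := by
  unfold Lop
  refine ContinuousOn.add (continuousOn_const.mul (continuousOn_finsetSum _ fun j _ => ?_))
    (continuous_const.mul (continuous_finsetSum _ fun j _ => continuous_finsetSum _ fun k _ =>
      continuous_const.mul (secondD_continuous hH _))).continuousOn
  refine ((continuousOn_const (c := m j)).mul (hD j).2).congr fun x hx => ?_
  by_cases h : x j = 0
  · simp [h]
  · have : 0 < x j := lt_of_le_of_ne (hx.1 j) (Ne.symm h)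
    change (if x j ≠ 0 then _ else _) = m j * (if 0 < x j then _ else _)
    rw [if_pos h, if_pos this]
    ring

lemma Flat.memD {r : S → S → ℝ} {H : (S → ℝ) → ℝ} (hH : Flat r H) (j : S) : memD r j H := by
  obtain ⟨hC, ε, hε, hflat⟩ := hH
  refine ⟨hC, ?_⟩
  have hcont : Continuous (fun x : S → ℝ => fderiv ℝ H x (vvec r j) / max (x j) ε) :=
    (fderiv_apply_continuous hC _).div (by fun_prop) fun x =>
      (lt_of_lt_of_le hε (le_max_right _ _)).ne'
  refine hcont.continuousOn.congr fun x hx => ?_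
  by_cases h : x j < ε
  · simp [hflat x hx j h]
  · push Not at h
    simp [lt_of_lt_of_le hε h, max_eq_left h]

lemma Flat.pow {r : S → S → ℝ} {H : (S → ℝ) → ℝ} (hH : Flat r H) (n : ℕ) :
    Flat r (fun x => H x ^ n) := by
  obtain ⟨hC, ε, hε, hflat⟩ := hH
  refine ⟨hC.pow n, ε, hε, fun x hx j hj => ?_⟩
  rw [fderiv_comp_apply hC (φ := fun t => t ^ n) (φ' := fun t => n * t ^ (n - 1))
    (fun t => hasDerivAt_pow n t), hflat x hx j hj, mul_zero]

lemma Lop_pow (r : S → S → ℝ) (m : S → ℝ) (b : ℝ) {H : (S → ℝ) → ℝ} (hH : ContDiff ℝ 2 H)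
    (n : ℕ) (x : S → ℝ) :
    Lop r m b (fun z => H z ^ n) x = n * H x ^ (n - 1) * Lop r m b H x
      + (1 / 2) * (n * ((n - 1 : ℕ) * H x ^ (n - 1 - 1))) * carre r m H x := by
  refine Lop_comp r m b hH (φ := fun t => t ^ n) (φ' := fun t => n * t ^ (n - 1))
    (φ'' := fun t => n * ((n - 1 : ℕ) * t ^ (n - 1 - 1))) (fun t => hasDerivAt_pow n t)
    (fun t => ?_) x
  exact (hasDerivAt_pow (n - 1) t).const_mul _

/-- A continuous function on the simplex is bounded there. -/
lemma simplex_bound {g : (S → ℝ) → ℝ} (hg : ContinuousOn g (stdSimplex ℝ S)) :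
    ∃ K : ℝ, 0 ≤ K ∧ ∀ x ∈ stdSimplex ℝ S, |g x| ≤ K := by
  obtain ⟨K, hK⟩ := (isCompact_stdSimplex ℝ S).exists_bound_of_continuousOn hg
  exact ⟨max K 0, le_max_right _ _, fun x hx => (hK x hx).trans (le_max_left _ _)⟩

/-! ### Functionals on path space -/

instance : BorelSpace (PathSp S) := ⟨rfl⟩

lemma path_continuous {g : (S → ℝ) → ℝ} (hg : ContinuousOn g (stdSimplex ℝ S)) :
    Continuous (fun p : PathSp S × ℝ => g (p.1 p.2.toNNReal : S → ℝ)) := by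
  have h1 : Continuous (fun y : stdSimplex ℝ S => g (y : S → ℝ)) :=
    continuousOn_iff_continuous_domRestrict.1 hg
  have h2 : Continuous (fun p : PathSp S × ℝ => p.1 p.2.toNNReal) := by fun_prop
  exact h1.comp h2

lemma eval_continuous {g : (S → ℝ) → ℝ} (hg : ContinuousOn g (stdSimplex ℝ S)) (t : ℝ≥0) :
    Continuous (fun ω : PathSp S => g (ω t : S → ℝ)) := by
  have := (path_continuous hg).comp (Continuous.prodMk_left (t : ℝ))
  simpa [Function.comp_def] using this

lemma path_continuous_right {g : (S → ℝ) → ℝ} (hg : ContinuousOn g (stdSimplex ℝ S))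
    (ω : PathSp S) : Continuous (fun u : ℝ => g (ω u.toNNReal : S → ℝ)) :=
  (path_continuous hg).comp (Continuous.prodMk_right ω)

lemma timeIntegral_continuous {g : (S → ℝ) → ℝ} (hg : ContinuousOn g (stdSimplex ℝ S))
    {I : Set ℝ} (hI : volume I ≠ ∞) :
    Continuous (fun ω : PathSp S => ∫ u in I, g (ω u.toNNReal : S → ℝ)) := by
  obtain ⟨K, -, hK⟩ := simplex_bound hg
  have : IsFiniteMeasure (volume.restrict I) := ⟨by simpa using hI.lt_top⟩
  refine continuous_of_dominated (bound := fun _ => K) (fun ω => ?_) (fun ω => ?_)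
    (integrable_const K) ?_
  · exact (path_continuous_right hg ω).aestronglyMeasurable
  · exact Filter.Eventually.of_forall fun u => hK _ (ω _).2
  · exact Filter.Eventually.of_forall fun u => eval_continuous hg _

lemma martProc_continuous (r : S → S → ℝ) (m : S → ℝ) (b : ℝ) {H : (S → ℝ) → ℝ}
    (hD : ∀ j, memD r j H) (hC : ContDiff ℝ 2 H) (t : ℝ≥0) :
    Continuous (martProc r m b H t) := by
  unfold martProc
  exact (eval_continuous hC.continuous.continuousOn t).sub
    (timeIntegral_continuous (Lop_continuousOn r m b hC hD) (by simp))

lemma timeIntegral_bound {g : (S → ℝ) → ℝ} {K : ℝ} (hK : ∀ x ∈ stdSimplex ℝ S, |g x| ≤ K)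
    {I : Set ℝ} (hI : volume I ≠ ∞) (ω : PathSp S) :
    |∫ u in I, g (ω u.toNNReal : S → ℝ)| ≤ K * volume.real I :=
  norm_setIntegral_le_of_norm_le_const (E := ℝ) (f := fun u : ℝ => g (ω u.toNNReal : S → ℝ))
    hI.lt_top fun _ _ => hK _ (ω _).2

lemma martProc_bound (r : S → S → ℝ) (m : S → ℝ) (b : ℝ) {H : (S → ℝ) → ℝ}
    (hD : ∀ j, memD r j H) (hC : ContDiff ℝ 2 H) (t : ℝ≥0) :
    ∃ K : ℝ, ∀ ω, |martProc r m b H t ω| ≤ K := by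
  obtain ⟨K1, -, hK1⟩ := simplex_bound hC.continuous.continuousOn
  obtain ⟨K2, -, hK2⟩ := simplex_bound (Lop_continuousOn r m b hC hD)
  refine ⟨K1 + K2 * volume.real (Set.Icc (0 : ℝ) t), fun ω => ?_⟩
  exact (abs_sub _ _).trans (add_le_add (hK1 _ (ω t).2) (timeIntegral_bound hK2 (by simp) ω))

lemma integrable_of_cont_bdd {μ : Measure (PathSp S)} [IsFiniteMeasure μ] {f : PathSp S → ℝ}
    (hf : Continuous f) {K : ℝ} (hK : ∀ ω, |f ω| ≤ K) : Integrable f μ :=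
  Integrable.of_bound hf.aestronglyMeasurable K (Filter.Eventually.of_forall hK)

lemma filtr_le (t : ℝ≥0) : filtr S t ≤ borel (PathSp S) := by
  unfold filtr
  refine iSup₂_le fun s _ => ?_
  rw [← measurable_iff_comap_le]
  have : Continuous (fun ω : PathSp S => ((ω s : S → ℝ))) := by fun_prop
  exact this.measurable

lemma eval_measurable_filtr {u s : ℝ≥0} (hus : u ≤ s) :
    Measurable[filtr S s] (fun ω : PathSp S => (ω u : S → ℝ)) := by
  rw [measurable_iff_comap_le]
  exact le_iSup₂ (f := fun (u : ℝ≥0) (_ : u ∈ Set.Iic s) =>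
    MeasurableSpace.comap (fun ω : PathSp S => ((ω u : S → ℝ))) inferInstance) u
      (Set.mem_Iic.2 hus)

/-! ### Moments of the increments -/

/-- Increments of a bounded martingale are orthogonal to the past. -/
lemma martingale_test {μ : Measure (PathSp S)} [IsProbabilityMeasure μ]
    {M : ℝ≥0 → PathSp S → ℝ} (hM : IsMartingale μ M) {s t : ℝ≥0} (hst : s ≤ t)
    {Z : PathSp S → ℝ} (hZ : Measurable[filtr S s] Z) {K : ℝ} (hK : ∀ ω, |Z ω| ≤ K) :
    ∫ ω, Z ω * M t ω ∂μ = ∫ ω, Z ω * M s ω ∂μ := by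
  have hle := filtr_le (S := S) s
  have hae : M s =ᵐ[μ] μ[M t | filtr S s] :=
    ae_eq_condExp_of_forall_setIntegral_eq hle (hM.1 t) (fun A _ _ => (hM.1 s).integrableOn)
      (fun A hA _ => (hM.2.2 s t hst A hA).symm) (hM.2.1 s).stronglyMeasurable.aestronglyMeasurable
  have hint : Integrable (Z * M t) μ :=
    (hM.1 t).bdd_mul (c := K) (hZ.mono hle le_rfl).aestronglyMeasurable
      (Filter.Eventually.of_forall hK)
  have h1 := condExp_mul_of_stronglyMeasurable_left hZ.stronglyMeasurable hint (hM.1 t)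
  calc ∫ ω, Z ω * M t ω ∂μ = ∫ ω, (μ[Z * M t | filtr S s]) ω ∂μ := (integral_condExp hle).symm
    _ = ∫ ω, Z ω * M s ω ∂μ := by
      refine integral_congr_ae ?_
      filter_upwards [h1, hae] with ω h1 h2
      rw [h1, Pi.mul_apply, h2]

/-- Dynkin's formula between times `s` and `t`, tested against a function of `X_s`. -/
lemma dynkin {r : S → S → ℝ} {m : S → ℝ} {b : ℝ} {μ : Measure (PathSp S)} [IsProbabilityMeasure μ]
    (hμ : SolvesMP r m b μ) {H z : (S → ℝ) → ℝ} (hH : Flat r H) (hz : Continuous z)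
    {s t : ℝ≥0} (hst : s ≤ t) :
    ∫ ω, z (ω s : S → ℝ) * (H (ω t : S → ℝ) - H (ω s : S → ℝ)) ∂μ
      = ∫ ω, z (ω s : S → ℝ) * (∫ u in Set.Ioc (s : ℝ) t, Lop r m b H (ω u.toNNReal : S → ℝ)) ∂μ
      := by
  obtain ⟨K, -, hK⟩ := simplex_bound hz.continuousOn
  have hzb : ∀ ω : PathSp S, |z (ω s : S → ℝ)| ≤ K := fun ω => hK _ (ω s).2
  have hM := hμ H hH.memD
  have htest : ∫ ω, z (ω s : S → ℝ) * martProc r m b H t ω ∂μ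
      = ∫ ω, z (ω s : S → ℝ) * martProc r m b H s ω ∂μ :=
    martingale_test hM hst (hz.measurable.comp (eval_measurable_filtr le_rfl)) hzb
  have hzc := eval_continuous hz.continuousOn s
  have hint : ∀ t, Integrable (fun ω : PathSp S => z (ω s : S → ℝ) * martProc r m b H t ω) μ :=
    fun t => (hM.1 t).bdd_mul (c := K) hzc.aestronglyMeasurable (Filter.Eventually.of_forall hzb)
  have hL := Lop_continuousOn r m b hH.1 hH.memD
  have hid : ∀ ω : PathSp S, martProc r m b H t ω - martProc r m b H s ω
      = (H (ω t : S → ℝ) - H (ω s : S → ℝ))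
        - ∫ u in Set.Ioc (s : ℝ) t, Lop r m b H (ω u.toNNReal : S → ℝ) := by
    intro ω
    have hcont := path_continuous_right hL ω
    have hs : (s : ℝ) ≤ t := by exact_mod_cast hst
    have hU : Set.Icc (0 : ℝ) t = Set.Icc 0 (s : ℝ) ∪ Set.Ioc (s : ℝ) t :=
      (Set.Icc_union_Ioc_eq_Icc s.2 hs).symm
    have := setIntegral_union (μ := volume) (f := fun u : ℝ => Lop r m b H (ω u.toNNReal : S → ℝ))
      (s := Set.Icc 0 (s : ℝ)) (t := Set.Ioc (s : ℝ) t)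
      (Set.disjoint_left.2 fun u hu hu' => absurd hu.2 (not_le.2 hu'.1)) measurableSet_Ioc
      hcont.integrableOn_Icc (hcont.integrableOn_Icc.mono_set Set.Ioc_subset_Icc_self)
    rw [← hU] at this
    unfold martProc
    rw [this]
    ring
  obtain ⟨K1, -, hK1⟩ := simplex_bound hH.1.continuous.continuousOn
  obtain ⟨K2, -, hK2⟩ := simplex_bound hL
  have hi1 : Integrable (fun ω : PathSp S =>
      z (ω s : S → ℝ) * (H (ω t : S → ℝ) - H (ω s : S → ℝ))) μ :=
    (integrable_of_cont_bdd ((eval_continuous hH.1.continuous.continuousOn t).sub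
      (eval_continuous hH.1.continuous.continuousOn s))
      (K := K1 + K1) fun ω => (abs_sub _ _).trans
        (add_le_add (hK1 _ (ω t).2) (hK1 _ (ω s).2))).bdd_mul (c := K) hzc.aestronglyMeasurable
      (Filter.Eventually.of_forall hzb)
  have hi2 : Integrable (fun ω : PathSp S =>
      z (ω s : S → ℝ) * ∫ u in Set.Ioc (s : ℝ) t, Lop r m b H (ω u.toNNReal : S → ℝ)) μ :=
    (integrable_of_cont_bdd (timeIntegral_continuous hL (by simp))
      fun ω => timeIntegral_bound hK2 (by simp) ω).bdd_mul (c := K) hzc.aestronglyMeasurable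
      (Filter.Eventually.of_forall hzb)
  rw [← sub_eq_zero, ← integral_sub hi1 hi2]
  rw [← sub_eq_zero, ← integral_sub (hint t) (hint s)] at htest
  rw [← htest]
  refine integral_congr_ae (Filter.Eventually.of_forall fun ω => ?_)
  change _ = z (ω s : S → ℝ) * martProc r m b H t ω - z (ω s : S → ℝ) * martProc r m b H s ω
  rw [← mul_sub, hid ω]
  ring

/-- Dynkin's formula for polynomials in `H(X_t)` whose coefficients depend on `X_s`; the time
integral is taken outside. -/
lemma dynkin_poly {r : S → S → ℝ} {m : S → ℝ} {b : ℝ} {μ : Measure (PathSp S)}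
    [IsProbabilityMeasure μ] (hμ : SolvesMP r m b μ) {H : (S → ℝ) → ℝ} (hH : Flat r H)
    (n : ℕ) {z : ℕ → (S → ℝ) → ℝ} (hz : ∀ k, Continuous (z k)) {s t : ℝ≥0} (hst : s ≤ t) :
    ∫ ω, ∑ k ∈ Finset.range n, z k (ω s : S → ℝ) * (H (ω t : S → ℝ) ^ k - H (ω s : S → ℝ) ^ k) ∂μ
      = ∫ u in Set.Ioc (s : ℝ) t, ∫ ω, ∑ k ∈ Finset.range n, z k (ω s : S → ℝ) *
          Lop r m b (fun x => H x ^ k) (ω u.toNNReal : S → ℝ) ∂μ := by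
  have hHc : ∀ k : ℕ, Continuous fun x => H x ^ k := fun k => hH.1.continuous.pow k
  have hL : ∀ k : ℕ, ContinuousOn (Lop r m b (fun x => H x ^ k)) (stdSimplex ℝ S) := fun k =>
    Lop_continuousOn r m b (hH.pow k).1 (hH.pow k).memD
  have hzc : ∀ k, Continuous fun ω : PathSp S => z k (ω s : S → ℝ) := fun k =>
    eval_continuous (hz k).continuousOn s
  choose Kz hKz0 hKz using fun k => simplex_bound (hz k).continuousOn
  choose KH hKH0 hKH using fun k => simplex_bound (hHc k).continuousOn
  choose KL hKL0 hKL using fun k => simplex_bound (hL k)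
  have hi1 : ∀ k ∈ Finset.range n, Integrable (fun ω : PathSp S =>
      z k (ω s : S → ℝ) * (H (ω t : S → ℝ) ^ k - H (ω s : S → ℝ) ^ k)) μ := fun k _ =>
    integrable_of_cont_bdd ((hzc k).mul ((eval_continuous (hHc k).continuousOn t).sub
      (eval_continuous (hHc k).continuousOn s))) (K := Kz k * (KH k + KH k)) fun ω => by
        rw [abs_mul]
        exact mul_le_mul (hKz k _ (ω s).2) ((abs_sub _ _).trans
          (add_le_add (hKH k _ (ω t).2) (hKH k _ (ω s).2))) (abs_nonneg _) (hKz0 k)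
  have hF : ∀ k, Continuous fun p : PathSp S × ℝ =>
      z k (p.1 s : S → ℝ) * Lop r m b (fun x => H x ^ k) (p.1 p.2.toNNReal : S → ℝ) := fun k =>
    ((hzc k).comp continuous_fst).mul (path_continuous (hL k))
  have hFb : ∀ k, ∀ p : PathSp S × ℝ,
      |z k (p.1 s : S → ℝ) * Lop r m b (fun x => H x ^ k) (p.1 p.2.toNNReal : S → ℝ)|
        ≤ Kz k * KL k := fun k p => by
    rw [abs_mul]
    exact mul_le_mul (hKz k _ (p.1 s).2) (hKL k _ (p.1 _).2) (abs_nonneg _) (hKz0 k)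
  have hfin : IsFiniteMeasure (volume.restrict (Set.Ioc (s : ℝ) t)) := ⟨by simp⟩
  have hi2 : ∀ k, Integrable (fun p : PathSp S × ℝ =>
      z k (p.1 s : S → ℝ) * Lop r m b (fun x => H x ^ k) (p.1 p.2.toNNReal : S → ℝ))
      (μ.prod (volume.restrict (Set.Ioc (s : ℝ) t))) := fun k =>
    Integrable.of_bound (hF k).aestronglyMeasurable _ (Filter.Eventually.of_forall (hFb k))
  have hi3 : ∀ (u : ℝ), ∀ k ∈ Finset.range n, Integrable (fun ω : PathSp S =>
      z k (ω s : S → ℝ) * Lop r m b (fun x => H x ^ k) (ω u.toNNReal : S → ℝ)) μ := fun u k _ =>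
    integrable_of_cont_bdd ((hF k).comp (Continuous.prodMk_left u)) fun ω => hFb k (ω, u)
  rw [integral_finsetSum _ hi1]
  simp_rw [fun u => integral_finsetSum _ (hi3 u)]
  rw [integral_finsetSum _ fun k _ => (hi2 k).integral_prod_right]
  refine Finset.sum_congr rfl fun k _ => ?_
  rw [dynkin hμ (hH.pow k) (hz k) hst]
  simp_rw [← integral_const_mul]
  exact integral_integral_swap (hi2 k)

/-- Second moments of the increments of a flat function, uniformly in the solution. -/
lemma second_moment (r : S → S → ℝ) (m : S → ℝ) (b : ℝ) {H : (S → ℝ) → ℝ} (hH : Flat r H) :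
    ∃ K : ℝ, 0 ≤ K ∧ ∀ μ : Measure (PathSp S), IsProbabilityMeasure μ → SolvesMP r m b μ →
      ∀ s t : ℝ≥0, s ≤ t →
        ∫ ω, (H (ω t : S → ℝ) - H (ω s : S → ℝ)) ^ 2 ∂μ ≤ K * (t - s) := by
  have hL := Lop_continuousOn r m b hH.1 hH.memD
  obtain ⟨K1, h1, hK1⟩ := simplex_bound hH.1.continuous.continuousOn
  obtain ⟨K2, h2, hK2⟩ := simplex_bound hL
  obtain ⟨K3, h3, hK3⟩ := simplex_bound (carre_continuous r m hH.1).continuousOn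
  refine ⟨2 * (K1 + K1) * K2 + K3, by positivity, fun μ _ hμ s t hst => ?_⟩
  have hst' : (s : ℝ) ≤ t := by exact_mod_cast hst
  have hz : ∀ k : ℕ, Continuous fun x => (Nat.choose 2 k : ℝ) * (-H x) ^ (2 - k) := fun k =>
    continuous_const.mul (hH.1.continuous.neg.pow _)
  have key := dynkin_poly hμ hH 3 hz hst
  -- for fixed `c`, `(H - c) ^ 2` is a polynomial in `H`; here `c = H (X_s)`
  have e1 : ∀ ω : PathSp S, ∑ k ∈ Finset.range 3,
      (Nat.choose 2 k : ℝ) * (-H (ω s : S → ℝ)) ^ (2 - k)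
      * (H (ω t : S → ℝ) ^ k - H (ω s : S → ℝ) ^ k)
      = (H (ω t : S → ℝ) - H (ω s : S → ℝ)) ^ 2 := fun ω => by
    simp [Finset.sum_range_succ]; ring
  have e2 : ∀ c x, ∑ k ∈ Finset.range 3, (Nat.choose 2 k : ℝ) * (-H c) ^ (2 - k)
      * Lop r m b (fun x => H x ^ k) x
      = 2 * (H x - H c) * Lop r m b H x + carre r m H x := fun c x => by
    simp [Finset.sum_range_succ, Lop_pow r m b hH.1]; ring
  simp_rw [e1, e2] at key
  rw [key]
  refine (le_abs_self _).trans ((norm_setIntegral_le_of_norm_le_const (E := ℝ)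
    (C := 2 * (K1 + K1) * K2 + K3) (by simp) fun u _ => ?_).trans_eq ?_)
  · refine (norm_integral_le_of_norm_le_const (C := 2 * (K1 + K1) * K2 + K3)
      (Filter.Eventually.of_forall fun ω => ?_)).trans_eq (by simp)
    refine (abs_add_le _ _).trans (add_le_add ?_ (hK3 _ (ω _).2))
    rw [abs_mul, abs_mul, abs_two]
    gcongr
    · exact (abs_sub _ _).trans (add_le_add (hK1 _ (ω _).2) (hK1 _ (ω _).2))
    · exact hK2 _ (ω _).2
  · simp [hst']

/-- Fourth moments of the increments of a flat function, uniformly in the solution. -/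
lemma fourth_moment (r : S → S → ℝ) (m : S → ℝ) (b : ℝ) {H : (S → ℝ) → ℝ} (hH : Flat r H) :
    ∃ K : ℝ, 0 ≤ K ∧ ∀ μ : Measure (PathSp S), IsProbabilityMeasure μ → SolvesMP r m b μ →
      ∀ s t : ℝ≥0, s ≤ t →
        ∫ ω, (H (ω t : S → ℝ) - H (ω s : S → ℝ)) ^ 4 ∂μ ≤ K * (t - s) ^ 2 := by
  have hL := Lop_continuousOn r m b hH.1 hH.memD
  obtain ⟨K1, h1, hK1⟩ := simplex_bound hH.1.continuous.continuousOn
  obtain ⟨K2, h2, hK2⟩ := simplex_bound hL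
  obtain ⟨K3, h3, hK3⟩ := simplex_bound (carre_continuous r m hH.1).continuousOn
  obtain ⟨C, hC, hC2⟩ := second_moment r m b hH
  set K := 4 * (K1 + K1) * K2 + 6 * K3 with hKdef
  have hK : 0 ≤ K := by positivity
  refine ⟨K * C, by positivity, fun μ hp hμ s t hst => ?_⟩
  have hst' : (s : ℝ) ≤ t := by exact_mod_cast hst
  have hz : ∀ k : ℕ, Continuous fun x => (Nat.choose 4 k : ℝ) * (-H x) ^ (4 - k) := fun k =>
    continuous_const.mul (hH.1.continuous.neg.pow _)
  have key := dynkin_poly hμ hH 5 hz hst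
  -- the same with `(H - c) ^ 4`, whose image under the operator is `O((H - c) ^ 2)`
  have e1 : ∀ ω : PathSp S, ∑ k ∈ Finset.range 5,
      (Nat.choose 4 k : ℝ) * (-H (ω s : S → ℝ)) ^ (4 - k)
      * (H (ω t : S → ℝ) ^ k - H (ω s : S → ℝ) ^ k)
      = (H (ω t : S → ℝ) - H (ω s : S → ℝ)) ^ 4 := fun ω => by
    simp [Finset.sum_range_succ, Nat.choose]; ring
  have e2 : ∀ c x, ∑ k ∈ Finset.range 5, (Nat.choose 4 k : ℝ) * (-H c) ^ (4 - k)
      * Lop r m b (fun x => H x ^ k) x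
      = (H x - H c) ^ 2 * (4 * (H x - H c) * Lop r m b H x + 6 * carre r m H x) := fun c x => by
    simp [Finset.sum_range_succ, Lop_pow r m b hH.1, Nat.choose]; ring
  simp_rw [e1, e2] at key
  rw [key]
  refine (le_abs_self _).trans ((norm_setIntegral_le_of_norm_le_const (E := ℝ)
    (C := K * (C * (t - s))) (by simp) fun u hu => ?_).trans_eq ?_)
  · have hu0 : (0 : ℝ) ≤ u := s.2.trans hu.1.le
    have hsu : s ≤ u.toNNReal := by
      rw [← NNReal.coe_le_coe, Real.coe_toNNReal _ hu0]; exact hu.1.le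
    have h2m := hC2 μ hp hμ s u.toNNReal hsu
    rw [Real.coe_toNNReal _ hu0] at h2m
    have hint : Integrable (fun ω : PathSp S =>
        K * (H (ω u.toNNReal : S → ℝ) - H (ω s : S → ℝ)) ^ 2) μ := by
      refine Integrable.const_mul (integrable_of_cont_bdd
        (((eval_continuous hH.1.continuous.continuousOn _).sub
        (eval_continuous hH.1.continuous.continuousOn s)).pow 2) (K := (K1 + K1) ^ 2) fun ω => ?_) K
      change |(H (ω u.toNNReal : S → ℝ) - H (ω s : S → ℝ)) ^ 2| ≤ _
      rw [abs_pow]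
      gcongr
      exact (abs_sub _ _).trans (add_le_add (hK1 _ (ω _).2) (hK1 _ (ω _).2))
    refine (norm_integral_le_of_norm_le hint (Filter.Eventually.of_forall fun ω => ?_)).trans ?_
    · rw [Real.norm_eq_abs, abs_mul, abs_of_nonneg (sq_nonneg _), mul_comm K]
      gcongr
      refine (abs_add_le _ _).trans (add_le_add ?_ ?_)
      · rw [abs_mul, abs_mul, abs_of_pos (by norm_num : (0 : ℝ) < 4)]
        gcongr
        · exact (abs_sub _ _).trans (add_le_add (hK1 _ (ω _).2) (hK1 _ (ω _).2))
        · exact hK2 _ (ω _).2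
      · rw [abs_mul, abs_of_pos (by norm_num : (0 : ℝ) < 6)]
        gcongr
        exact hK3 _ (ω _).2
    · rw [integral_const_mul]
      gcongr
      exact h2m.trans (by gcongr; exact hu.2)
  · simp [hst']; ring

/-! ### Dyadic chaining -/

/-- Passing from the dyadic approximation of `t` at level `n` to the one at level `n + 1` costs at
most one increment of level `n + 1`. -/
lemma dyadic_step {f : ℝ → ℝ} {N n : ℕ} {δ : ℝ} (hδ : 0 ≤ δ)
    (h : ∀ k : ℕ, k < N * 2 ^ (n + 1) →
      |f (((k : ℝ) + 1) / 2 ^ (n + 1)) - f ((k : ℝ) / 2 ^ (n + 1))| ≤ δ)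
    {t : ℝ} (ht : 0 ≤ t) (htN : t ≤ N) :
    |f ((⌊t * 2 ^ (n + 1)⌋₊ : ℝ) / 2 ^ (n + 1)) - f ((⌊t * 2 ^ n⌋₊ : ℝ) / 2 ^ n)| ≤ δ := by
  set q := ⌊t * 2 ^ n⌋₊ with hq
  have h0 : 0 ≤ t * 2 ^ n := by positivity
  have h1 : (q : ℝ) ≤ t * 2 ^ n := Nat.floor_le h0
  have h2 : t * 2 ^ n < q + 1 := Nat.lt_floor_add_one _
  have e : t * 2 ^ (n + 1) = 2 * (t * 2 ^ n) := by ring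
  have l1 : 2 * q ≤ ⌊t * 2 ^ (n + 1)⌋₊ := by
    apply Nat.le_floor; push_cast; rw [e]; linarith
  have l2 : ⌊t * 2 ^ (n + 1)⌋₊ < 2 * q + 2 := by
    rw [Nat.floor_lt (by positivity)]; push_cast; rw [e]; linarith
  have hd : (q : ℝ) / 2 ^ n = ((2 * q : ℕ) : ℝ) / 2 ^ (n + 1) := by
    push_cast; rw [pow_succ]; field_simp
  rw [hd]
  obtain h3 | h3 : ⌊t * 2 ^ (n + 1)⌋₊ = 2 * q ∨ ⌊t * 2 ^ (n + 1)⌋₊ = 2 * q + 1 := by omega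
  · rw [h3]; simpa using hδ
  · have hle : ((2 * q + 1 : ℕ) : ℝ) ≤ ((N * 2 ^ (n + 1) : ℕ) : ℝ) := by
      rw [← h3]
      refine (Nat.floor_le (by positivity)).trans ?_
      push_cast
      gcongr
    have := h (2 * q) (by exact_mod_cast hle)
    rw [h3]
    exact_mod_cast this

/-- Chaining: the distance to the dyadic approximation at level `n₀` is at most the geometric sum
`∑ n > n₀, (9 / 10) ^ n`. -/
lemma dyadic_chain {f : ℝ → ℝ} (hf : Continuous f) {N n₀ : ℕ}
    (h : ∀ n ≥ n₀, ∀ k : ℕ, k < N * 2 ^ n →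
      |f (((k : ℝ) + 1) / 2 ^ n) - f ((k : ℝ) / 2 ^ n)| ≤ (9 / 10 : ℝ) ^ n)
    {t : ℝ} (ht : 0 ≤ t) (htN : t ≤ N) :
    |f t - f ((⌊t * 2 ^ n₀⌋₊ : ℝ) / 2 ^ n₀)| ≤ 9 * (9 / 10 : ℝ) ^ n₀ := by
  have hp : ∀ p : ℕ, |f ((⌊t * 2 ^ (n₀ + p)⌋₊ : ℝ) / 2 ^ (n₀ + p))
      - f ((⌊t * 2 ^ n₀⌋₊ : ℝ) / 2 ^ n₀)| ≤ 9 * (9 / 10 : ℝ) ^ n₀ - 9 * (9 / 10 : ℝ) ^ (n₀ + p) := by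
    intro p
    induction p with
    | zero => simp
    | succ p ih =>
      have := dyadic_step (δ := (9 / 10 : ℝ) ^ (n₀ + p + 1)) (by positivity)
        (h (n₀ + p + 1) (by omega)) ht htN
      have h3 := abs_sub_le (f ((⌊t * 2 ^ (n₀ + p + 1)⌋₊ : ℝ) / 2 ^ (n₀ + p + 1)))
        (f ((⌊t * 2 ^ (n₀ + p)⌋₊ : ℝ) / 2 ^ (n₀ + p))) (f ((⌊t * 2 ^ n₀⌋₊ : ℝ) / 2 ^ n₀))
      rw [← add_assoc]
      have e : (9 / 10 : ℝ) ^ (n₀ + p + 1) = (9 / 10) * (9 / 10 : ℝ) ^ (n₀ + p) := by ring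
      linarith
  have hlim : Filter.Tendsto (fun p : ℕ => (⌊t * 2 ^ (n₀ + p)⌋₊ : ℝ) / 2 ^ (n₀ + p)) Filter.atTop
      (nhds t) := by
    have h1 : Filter.Tendsto (fun p : ℕ => (2 : ℝ) ^ (n₀ + p)) Filter.atTop Filter.atTop :=
      (tendsto_pow_atTop_atTop_of_one_lt (by norm_num : (1 : ℝ) < 2)).comp
        (Filter.tendsto_add_atTop_nat n₀ |>.congr fun p => add_comm _ _)
    exact (tendsto_nat_floor_mul_div_atTop ht).comp h1
  refine le_of_tendsto ((((hf.tendsto t).comp hlim).sub_const _).abs)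
    (Filter.Eventually.of_forall fun p => (hp p).trans ?_)
  have : 0 ≤ (9 / 10 : ℝ) ^ (n₀ + p) := by positivity
  linarith

lemma dyadic_modulus {f : ℝ → ℝ} (hf : Continuous f) {N n₀ : ℕ}
    (h : ∀ n ≥ n₀, ∀ k : ℕ, k < N * 2 ^ n →
      |f (((k : ℝ) + 1) / 2 ^ n) - f ((k : ℝ) / 2 ^ n)| ≤ (9 / 10 : ℝ) ^ n)
    {s t : ℝ} (hs : 0 ≤ s) (hst : s ≤ t) (htN : t ≤ N) (hd : t - s ≤ 1 / 2 ^ n₀) :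
    |f t - f s| ≤ 19 * (9 / 10 : ℝ) ^ n₀ := by
  have ht := dyadic_chain hf h (hs.trans hst) htN
  have hs' := dyadic_chain hf h hs (hst.trans htN)
  have hpos : (0 : ℝ) < 2 ^ n₀ := by positivity
  have hd' : t * 2 ^ n₀ ≤ s * 2 ^ n₀ + 1 := by
    rw [le_div_iff₀ hpos] at hd; linarith
  have l1 : ⌊s * 2 ^ n₀⌋₊ ≤ ⌊t * 2 ^ n₀⌋₊ := Nat.floor_mono (by gcongr)
  have l2 : ⌊t * 2 ^ n₀⌋₊ ≤ ⌊s * 2 ^ n₀⌋₊ + 1 := by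
    rw [← Nat.floor_add_one (mul_nonneg hs hpos.le)]
    exact Nat.floor_mono hd'
  have hmid : |f ((⌊t * 2 ^ n₀⌋₊ : ℝ) / 2 ^ n₀) - f ((⌊s * 2 ^ n₀⌋₊ : ℝ) / 2 ^ n₀)|
      ≤ (9 / 10 : ℝ) ^ n₀ := by
    obtain h3 | h3 : ⌊t * 2 ^ n₀⌋₊ = ⌊s * 2 ^ n₀⌋₊ ∨ ⌊t * 2 ^ n₀⌋₊ = ⌊s * 2 ^ n₀⌋₊ + 1 := by omega
    · rw [h3, sub_self, abs_zero]; positivity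
    · have hle : ((⌊s * 2 ^ n₀⌋₊ + 1 : ℕ) : ℝ) ≤ ((N * 2 ^ n₀ : ℕ) : ℝ) := by
        rw [← h3]
        refine (Nat.floor_le (mul_nonneg (hs.trans hst) hpos.le)).trans ?_
        push_cast
        gcongr
      have := h n₀ le_rfl ⌊s * 2 ^ n₀⌋₊ (by exact_mod_cast hle)
      rw [h3]
      exact_mod_cast this
  rw [abs_le] at *
  constructor <;> linarith [hs'.1, hs'.2, ht.1, ht.2, hmid.1, hmid.2]

/-- Uniform modulus of continuity in probability of a flat function along the solutions. -/
lemma flat_modulus (r : S → S → ℝ) (m : S → ℝ) (b : ℝ) {H : (S → ℝ) → ℝ} (hH : Flat r H)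
    (N : ℕ) {δ η : ℝ} (hδ : 0 < δ) (hη : 0 < η) :
    ∃ h : ℝ, 0 < h ∧ ∀ μ : Measure (PathSp S), IsProbabilityMeasure μ → SolvesMP r m b μ →
      μ {ω | ¬ ∀ s t : ℝ≥0, s ≤ t → (t : ℝ) ≤ N → (t : ℝ) - s ≤ h →
        |H (ω t : S → ℝ) - H (ω s : S → ℝ)| ≤ δ} ≤ ENNReal.ofReal η := by
  obtain ⟨C, hC0, hC⟩ := fourth_moment r m b hH
  obtain ⟨K1, h1, hK1⟩ := simplex_bound hH.1.continuous.continuousOn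
  -- a level-`n` increment exceeds `(9 / 10) ^ n` with probability `O((10 / 9) ^ (4 * n) / 4 ^ n)`;
  -- with `2 ^ n` increments per unit of time this is `O(θ ^ n)`
  set θ : ℝ := 5000 / 6561 with hθ
  have hθ0 : (0 : ℝ) ≤ θ := by norm_num [hθ]
  have hθ1 : θ < 1 := by norm_num [hθ]
  have lim1 : Filter.Tendsto (fun n : ℕ => (N * C * (1 - θ)⁻¹) * θ ^ n) Filter.atTop (nhds 0) := by
    simpa using (tendsto_pow_atTop_nhds_zero_of_lt_one hθ0 hθ1).const_mul (N * C * (1 - θ)⁻¹)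
  have lim2 : Filter.Tendsto (fun n : ℕ => 19 * (9 / 10 : ℝ) ^ n) Filter.atTop (nhds 0) := by
    simpa using (tendsto_pow_atTop_nhds_zero_of_lt_one (r := (9 / 10 : ℝ)) (by norm_num)
      (by norm_num)).const_mul 19
  obtain ⟨n₀, hn1, hn2⟩ := ((lim1.eventually (gt_mem_nhds hη)).and
    (lim2.eventually (gt_mem_nhds hδ))).exists
  refine ⟨1 / 2 ^ n₀, by positivity, fun μ hp hμ => ?_⟩
  let g : PathSp S → ℝ → ℝ := fun ω u => H (ω u.toNNReal : S → ℝ)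
  let bad : ℕ → Set (PathSp S) := fun n => ⋃ k ∈ Finset.range (N * 2 ^ n),
    {ω | ((9 / 10 : ℝ) ^ n) ^ 4 ≤ (g ω (((k : ℝ) + 1) / 2 ^ n) - g ω ((k : ℝ) / 2 ^ n)) ^ 4}
  have hbad : ∀ n, μ (bad n) ≤ ENNReal.ofReal (N * C * θ ^ n) := by
    intro n
    have hk : ∀ k ∈ Finset.range (N * 2 ^ n), μ {ω | ((9 / 10 : ℝ) ^ n) ^ 4 ≤
        (g ω (((k : ℝ) + 1) / 2 ^ n) - g ω ((k : ℝ) / 2 ^ n)) ^ 4}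
        ≤ ENNReal.ofReal (C * θ ^ n / 2 ^ n) := by
      intro k _
      have hint : Integrable (fun ω : PathSp S =>
          (g ω (((k : ℝ) + 1) / 2 ^ n) - g ω ((k : ℝ) / 2 ^ n)) ^ 4) μ := by
        refine integrable_of_cont_bdd
          (((eval_continuous hH.1.continuous.continuousOn _).sub
          (eval_continuous hH.1.continuous.continuousOn _)).pow 4) (K := (K1 + K1) ^ 4) fun ω => ?_
        rw [abs_pow]
        gcongr
        exact (abs_sub _ _).trans (add_le_add (hK1 _ (ω _).2) (hK1 _ (ω _).2))
      have hmar := mul_meas_ge_le_integral_of_nonneg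
        (Filter.Eventually.of_forall fun ω => by positivity) hint (((9 / 10 : ℝ) ^ n) ^ 4)
      have h4 := hC μ hp hμ ((k : ℝ) / 2 ^ n).toNNReal (((k : ℝ) + 1) / 2 ^ n).toNNReal
        (Real.toNNReal_le_toNNReal (by gcongr; linarith))
      rw [Real.coe_toNNReal _ (by positivity), Real.coe_toNNReal _ (by positivity)] at h4
      have h5 := hmar.trans h4
      rw [← ENNReal.ofReal_toReal (measure_ne_top μ _)]
      refine ENNReal.ofReal_le_ofReal ?_
      rw [show ((k : ℝ) + 1) / 2 ^ n - (k : ℝ) / 2 ^ n = 1 / 2 ^ n by ring] at h5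
      refine le_of_mul_le_mul_left (h5.trans_eq ?_)
        (by positivity : (0 : ℝ) < ((9 / 10 : ℝ) ^ n) ^ 4)
      have e1 : ((9 / 10 : ℝ) ^ n) ^ 4 * θ ^ n = 1 / 2 ^ n := by
        rw [← pow_mul, mul_comm n 4, pow_mul, ← mul_pow, hθ, ← one_div_pow]
        norm_num
      calc C * (1 / 2 ^ n) ^ 2 = C * (1 / 2 ^ n) / 2 ^ n := by ring
        _ = _ := by rw [← e1]; ring
    refine (measure_biUnion_finset_le _ _).trans ((Finset.sum_le_sum hk).trans_eq ?_)
    rw [Finset.sum_const, Finset.card_range, nsmul_eq_mul, ← ENNReal.ofReal_natCast,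
      ← ENNReal.ofReal_mul (by positivity)]
    congr 1
    push_cast
    field_simp
  have hsub : {ω : PathSp S | ¬ ∀ s t : ℝ≥0, s ≤ t → (t : ℝ) ≤ N → (t : ℝ) - s ≤ 1 / 2 ^ n₀ →
        |H (ω t : S → ℝ) - H (ω s : S → ℝ)| ≤ δ} ⊆ ⋃ p : ℕ, bad (n₀ + p) := by
    intro ω hω
    by_contra hgood
    apply hω
    intro s t hst htN hd
    have := dyadic_modulus (f := g ω) (path_continuous_right hH.1.continuous.continuousOn ω)
      (N := N) (n₀ := n₀) (s := s) (t := t) (fun n hn k hk => ?_) s.2 (by exact_mod_cast hst)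
      htN hd
    · simp only [g, Real.toNNReal_coe] at this
      exact this.trans hn2.le
    · by_contra hcon
      push Not at hcon
      apply hgood
      obtain ⟨p, rfl⟩ := Nat.exists_eq_add_of_le hn
      refine Set.mem_iUnion.2 ⟨p, Set.mem_iUnion₂.2 ⟨k, Finset.mem_range.2 hk, ?_⟩⟩
      change ((9 / 10 : ℝ) ^ (n₀ + p)) ^ 4
        ≤ (g ω (((k : ℝ) + 1) / 2 ^ (n₀ + p)) - g ω ((k : ℝ) / 2 ^ (n₀ + p))) ^ 4
      rw [← (by decide : Even 4).pow_abs (g ω (((k : ℝ) + 1) / 2 ^ (n₀ + p)) - _)]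
      gcongr
  refine (measure_mono hsub).trans ((measure_iUnion_le _).trans
    ((ENNReal.tsum_le_tsum fun p => hbad (n₀ + p)).trans ?_))
  have hsum : Summable fun p : ℕ => N * C * θ ^ (n₀ + p) := by
    simp_rw [pow_add, ← mul_assoc]
    exact (summable_geometric_of_lt_one hθ0 hθ1).mul_left _
  rw [← ENNReal.ofReal_tsum_of_nonneg (fun p => by positivity) hsum]
  refine ENNReal.ofReal_le_ofReal (le_trans (le_of_eq ?_) hn1.le)
  simp_rw [pow_add, ← mul_assoc]
  rw [tsum_mul_left, tsum_geometric_of_lt_one hθ0 hθ1]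
  ring

/-! ### Tightness -/

/-- Uniform modulus of continuity in probability of the paths themselves. -/
lemma path_modulus [Nonempty S] {r : S → S → ℝ} (hr : ∀ j k, 0 ≤ r j k) {C : ℝ}
    (hC : CombBound r C) (m : S → ℝ) (b : ℝ) (N : ℕ) {δ η : ℝ} (hδ : 0 < δ) (hη : 0 < η) :
    ∃ h : ℝ, 0 < h ∧ ∀ μ : Measure (PathSp S), IsProbabilityMeasure μ → SolvesMP r m b μ →
      μ {ω | ¬ ∀ s t : ℝ≥0, s ≤ N → t ≤ N → dist s t ≤ h → dist (ω s) (ω t) ≤ δ}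
        ≤ ENNReal.ofReal η := by
  have hcard : (0 : ℝ) < Fintype.card S := by positivity
  have hδ3 : 0 < δ / 3 := by positivity
  have hηc : 0 < η / Fintype.card S := by positivity
  choose G hG hGk using fun k : S => exists_flat hr hC k hδ3
  choose h hpos hh using fun k : S => flat_modulus r m b (hG k) N hδ3 hηc
  have hne : (Finset.univ : Finset S).Nonempty := Finset.univ_nonempty
  refine ⟨Finset.univ.inf' hne h, (Finset.lt_inf'_iff hne).2 fun k _ => hpos k, fun μ hp hμ => ?_⟩
  have hsub : {ω : PathSp S | ¬ ∀ s t : ℝ≥0, s ≤ N → t ≤ N → dist s t ≤ Finset.univ.inf' hne h →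
      dist (ω s) (ω t) ≤ δ} ⊆ ⋃ k ∈ (Finset.univ : Finset S),
        {ω | ¬ ∀ s t : ℝ≥0, s ≤ t → (t : ℝ) ≤ N → (t : ℝ) - s ≤ h k →
          |G k (ω t : S → ℝ) - G k (ω s : S → ℝ)| ≤ δ / 3} := by
    intro ω hω
    by_contra hgood
    simp only [Set.mem_iUnion, not_exists, Finset.mem_univ, true_imp_iff, Set.mem_ofPred_eq,
      not_not] at hgood
    apply hω
    have main : ∀ s t : ℝ≥0, s ≤ t → t ≤ N → dist s t ≤ Finset.univ.inf' hne h →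
        dist (ω s) (ω t) ≤ δ := by
      intro s t hst htN hd
      rw [Subtype.dist_eq]
      refine (dist_pi_le_iff hδ.le).2 fun k => ?_
      have h1 : (t : ℝ) - s ≤ h k := by
        have h2 : dist s t = (t : ℝ) - s := by
          rw [NNReal.dist_eq, abs_sub_comm, abs_of_nonneg]
          exact sub_nonneg.2 (by exact_mod_cast hst)
        rw [← h2]
        exact hd.trans (Finset.inf'_le _ (Finset.mem_univ k))
      have h3 := hgood k s t hst (by exact_mod_cast htN) h1
      have h4 : |G k (ω s : S → ℝ) - (ω s : S → ℝ) k| ≤ δ / 3 := hGk k _ (ω s).2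
      have h5 : |G k (ω t : S → ℝ) - (ω t : S → ℝ) k| ≤ δ / 3 := hGk k _ (ω t).2
      change |(ω s : S → ℝ) k - (ω t : S → ℝ) k| ≤ δ
      rw [abs_le] at *
      constructor <;> linarith [h3.1, h3.2, h4.1, h4.2, h5.1, h5.2]
    intro s t hs ht hd
    rcases le_total s t with hst | hst
    · exact main s t hst ht hd
    · rw [dist_comm]
      exact main t s hst hs (by rwa [dist_comm])
  refine (measure_mono hsub).trans ((measure_biUnion_finset_le _ _).trans
    ((Finset.sum_le_sum fun k _ => hh k μ hp hμ).trans_eq ?_))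
  rw [Finset.sum_const, Finset.card_univ, nsmul_eq_mul, ← ENNReal.ofReal_natCast,
      ← ENNReal.ofReal_mul (by positivity)]
  congr 1
  field_simp

lemma equicontinuous_of_modulus {ι Y : Type*} [PseudoMetricSpace Y] {F : ι → ℝ≥0 → Y}
    {h : ℕ → ℝ} (hpos : ∀ n, 0 < h n)
    (hF : ∀ i, ∀ n : ℕ, ∀ s t : ℝ≥0, s ≤ n → t ≤ n → dist s t ≤ h n →
      dist (F i s) (F i t) ≤ 1 / ((n : ℝ) + 1)) : Equicontinuous F := by
  intro t₀
  rw [Metric.equicontinuousAt_iff]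
  intro ε hε
  obtain ⟨n₁, hn₁⟩ := exists_nat_one_div_lt hε
  obtain ⟨n₂, hn₂⟩ := exists_nat_ge ((t₀ : ℝ) + 1)
  set n := max n₁ n₂
  refine ⟨min (h n) 1, lt_min (hpos n) one_pos, fun t ht i => ?_⟩
  have hn : (t₀ : ℝ) + 1 ≤ n := hn₂.trans (by exact_mod_cast le_max_right _ _)
  have hd : dist t t₀ < 1 := ht.trans_le (min_le_right _ _)
  rw [NNReal.dist_eq, abs_lt] at hd
  refine (hF i n t₀ t ?_ ?_ ?_).trans_lt (lt_of_le_of_lt ?_ hn₁)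
  · rw [← NNReal.coe_le_coe]; push_cast; linarith
  · rw [← NNReal.coe_le_coe]; push_cast; linarith [hd.2]
  · rw [dist_comm]; exact ht.le.trans (min_le_left _ _)
  · gcongr
    exact le_max_left _ _

/-- Paths with a prescribed modulus of continuity form a compact set (Arzelà–Ascoli). The modulus
condition is closed for pointwise convergence, and implies continuity. -/
lemma isCompact_modulus {h : ℕ → ℝ} (hpos : ∀ n, 0 < h n) :
    IsCompact {ω : PathSp S | ∀ n : ℕ, ∀ s t : ℝ≥0, s ≤ n → t ≤ n → dist s t ≤ h n →
      dist (ω s) (ω t) ≤ 1 / ((n : ℝ) + 1)} := by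
  have : CompactSpace (stdSimplex ℝ S) := isCompact_iff_compactSpace.1 (isCompact_stdSimplex ℝ S)
  refine ArzelaAscoli.isCompact_of_equicontinuous _ ?_ ?_
  · have himg : ContinuousMap.toFun '' {ω : PathSp S | ∀ n : ℕ, ∀ s t : ℝ≥0, s ≤ n → t ≤ n →
        dist s t ≤ h n → dist (ω s) (ω t) ≤ 1 / ((n : ℝ) + 1)}
        = {f : ℝ≥0 → stdSimplex ℝ S | ∀ n : ℕ, ∀ s t : ℝ≥0, s ≤ n → t ≤ n →
        dist s t ≤ h n → dist (f s) (f t) ≤ 1 / ((n : ℝ) + 1)} := by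
      ext f
      constructor
      · rintro ⟨ω, hω, rfl⟩; exact hω
      · intro hf
        have := equicontinuous_of_modulus (F := fun _ : Unit => f) hpos fun _ => hf
        exact ⟨⟨f, this.continuous ()⟩, hf, rfl⟩
    rw [himg]
    refine IsClosed.isCompact ?_
    simp only [Set.ofPred_forall]
    refine isClosed_iInter fun n => isClosed_iInter fun s => isClosed_iInter fun t =>
      isClosed_iInter fun _ => isClosed_iInter fun _ => isClosed_iInter fun _ => ?_
    exact isClosed_le (by fun_prop) continuous_const
  · exact equicontinuous_of_modulus hpos fun ω => ω.2

/-- The solutions of the martingale problem form a tight set. -/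
lemma tight_solutions [Nonempty S] {r : S → S → ℝ} (hr : ∀ j k, 0 ≤ r j k) {C : ℝ}
    (hC : CombBound r C) (m : S → ℝ) (b : ℝ) :
    IsTightMeasureSet {μ : Measure (PathSp S) | IsProbabilityMeasure μ ∧ SolvesMP r m b μ} := by
  rw [isTightMeasureSet_iff_exists_isCompact_measure_compl_le]
  intro ε hε
  obtain ⟨η, hη, hsum⟩ := ENNReal.exists_pos_sum_of_countable hε.ne' ℕ
  choose h hpos hh using fun n : ℕ => path_modulus hr hC m b n
    (δ := 1 / ((n : ℝ) + 1)) (η := η n) (by positivity) (hη n)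
  refine ⟨_, isCompact_modulus hpos, fun μ hμ => ?_⟩
  refine (measure_mono (t := ⋃ n : ℕ, {ω : PathSp S | ¬ ∀ s t : ℝ≥0, s ≤ n → t ≤ n →
    dist s t ≤ h n → dist (ω s) (ω t) ≤ 1 / ((n : ℝ) + 1)}) fun ω hω => ?_).trans
    ((measure_iUnion_le _).trans ((ENNReal.tsum_le_tsum fun n => hh n μ hμ.1 hμ.2).trans ?_))
  · rw [Set.mem_compl_iff, Set.mem_ofPred_eq, not_forall] at hω
    exact Set.mem_iUnion.2 hω
  · simpa using hsum.le

/-! ### Weak limits of solutions -/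

/-- Events whose indicator is a pointwise limit of continuous `filtr S s`-measurable functions with
values in `[0, 1]`. They form a π-system generating `filtr S s`. -/
def approxSets (S : Type*) [Fintype S] (s : ℝ≥0) : Set (Set (PathSp S)) :=
  {A | ∃ Z : ℕ → PathSp S → ℝ, (∀ n, Continuous (Z n)) ∧ (∀ n, Measurable[filtr S s] (Z n)) ∧
    (∀ n ω, |Z n ω| ≤ 1) ∧
    ∀ ω, Filter.Tendsto (fun n => Z n ω) Filter.atTop (nhds (A.indicator 1 ω))}

lemma approxSets_pi (s : ℝ≥0) : IsPiSystem (approxSets S s) := by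
  rintro A ⟨Z, h1, h2, h3, h4⟩ B ⟨Y, k1, k2, k3, k4⟩ -
  refine ⟨fun n ω => Z n ω * Y n ω, fun n => (h1 n).mul (k1 n),
    fun n => Measurable.mul (h2 n) (k2 n), fun n ω => ?_, fun ω => ?_⟩
  · rw [abs_mul]
    exact mul_le_one₀ (h3 n ω) (abs_nonneg _) (k3 n ω)
  · have := (h4 ω).mul (k4 ω)
    convert this using 2
    by_cases hA : ω ∈ A <;> by_cases hB : ω ∈ B <;> simp [hA, hB]

lemma univ_mem_approxSets (s : ℝ≥0) : Set.univ ∈ approxSets S s :=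
  ⟨fun _ _ => 1, fun _ => continuous_const, fun _ => measurable_const, fun _ _ => by simp,
    fun ω => by simp⟩

/-- Thickened indicators approximate the indicator of a closed set of values of `X_u`. -/
lemma eval_preimage_mem_approxSets {u s : ℝ≥0} (hus : u ≤ s) {F : Set (S → ℝ)}
    (hF : IsClosed F) : (fun ω : PathSp S => (ω u : S → ℝ)) ⁻¹' F ∈ approxSets S s := by
  have hδ : ∀ n : ℕ, (0 : ℝ) < 1 / ((n : ℝ) + 1) := fun n => by positivity
  have hlim := thickenedIndicator_tendsto_indicator_closure hδ
    tendsto_one_div_add_atTop_nhds_zero_nat F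
  rw [hF.closure_eq, tendsto_pi_nhds] at hlim
  have hc : ∀ n, Continuous fun y : S → ℝ => ((thickenedIndicator (hδ n) F y : ℝ≥0) : ℝ) := fun n =>
    NNReal.continuous_coe.comp (thickenedIndicator (hδ n) F).continuous
  refine ⟨fun n ω => ((thickenedIndicator (hδ n) F (ω u : S → ℝ) : ℝ≥0) : ℝ),
    fun n => eval_continuous (hc n).continuousOn u,
    fun n => (hc n).measurable.comp (eval_measurable_filtr hus), fun n ω => ?_, fun ω => ?_⟩
  · rw [abs_of_nonneg (NNReal.coe_nonneg _)]
    exact_mod_cast thickenedIndicator_le_one (hδ n) F _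
  · have hval : ((fun ω : PathSp S => (ω u : S → ℝ)) ⁻¹' F).indicator (1 : PathSp S → ℝ) ω
        = ((F.indicator (fun _ => (1 : ℝ≥0)) (ω u : S → ℝ) : ℝ≥0) : ℝ) := by
      by_cases h : (ω u : S → ℝ) ∈ F
      · rw [Set.indicator_of_mem (by exact h), Set.indicator_of_mem h]; simp
      · rw [Set.indicator_of_notMem (by exact h), Set.indicator_of_notMem h]; simp
    rw [hval]
    exact (NNReal.continuous_coe.tendsto _).comp (hlim (ω u : S → ℝ))

lemma approxSets_measurable {s : ℝ≥0} {A : Set (PathSp S)} (hA : A ∈ approxSets S s) :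
    MeasurableSet[filtr S s] A := by
  obtain ⟨Z, -, h2, -, h4⟩ := hA
  have : Measurable[filtr S s] (A.indicator (1 : PathSp S → ℝ)) :=
    @measurable_of_tendsto_metrizable _ _ (filtr S s) _ _ _ _ _ _ h2 (tendsto_pi_nhds.2 h4)
  have h := this (measurableSet_singleton (1 : ℝ))
  convert h using 1
  ext ω
  by_cases hω : ω ∈ A <;> simp [hω]

lemma filtr_eq_generateFrom (s : ℝ≥0) :
    filtr S s = MeasurableSpace.generateFrom (approxSets S s) := by
  refine le_antisymm (iSup₂_le fun u hu => measurable_iff_comap_le.1 ?_)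
    (MeasurableSpace.generateFrom_le fun A hA => approxSets_measurable hA)
  exact @measurable_of_isClosed _ _ _ _ _ (MeasurableSpace.generateFrom (approxSets S s)) _
    fun F hF => MeasurableSpace.measurableSet_generateFrom (eval_preimage_mem_approxSets hu hF)

/-- The martingale property of a bounded continuous process passes to weak limits. -/
lemma martingale_limit {ι : Type*} {U : Filter ι} [U.NeBot] {P : ι → ProbabilityMeasure (PathSp S)}
    {μ : ProbabilityMeasure (PathSp S)} (hP : Filter.Tendsto P U (nhds μ))
    {M : ℝ≥0 → PathSp S → ℝ} (hc : ∀ t, Continuous (M t)) (hb : ∀ t, ∃ K : ℝ, ∀ ω, |M t ω| ≤ K)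
    (hM : ∀ i, IsMartingale (P i : Measure (PathSp S)) M)
    (hmeas : ∀ t, Measurable[filtr S t] (M t)) : IsMartingale (μ : Measure (PathSp S)) M := by
  have hint : ∀ (ν : ProbabilityMeasure (PathSp S)) t, Integrable (M t) (ν : Measure (PathSp S)) :=
    fun ν t => integrable_of_cont_bdd (hc t) (hb t).choose_spec
  refine ⟨hint μ, hmeas, fun s t hst => ?_⟩
  obtain ⟨Kt, hKt⟩ := hb t
  obtain ⟨Ks, hKs⟩ := hb s
  have hDb : ∀ ω, |M t ω - M s ω| ≤ Kt + Ks := fun ω =>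
    (abs_sub _ _).trans (add_le_add (hKt ω) (hKs ω))
  have hDc : Continuous fun ω => M t ω - M s ω := (hc t).sub (hc s)
  have hDi : Integrable (fun ω => M t ω - M s ω) (μ : Measure (PathSp S)) :=
    integrable_of_cont_bdd hDc hDb
  have hK0 : 0 ≤ Kt + Ks := by
    obtain ⟨ω⟩ := (P (Filter.nonempty_of_neBot U).some).nonempty
    exact (abs_nonneg _).trans (hDb ω)
  have htest : ∀ Z : PathSp S → ℝ, Continuous Z → Measurable[filtr S s] Z → (∀ ω, |Z ω| ≤ 1) →
      ∫ ω, Z ω * (M t ω - M s ω) ∂(μ : Measure (PathSp S)) = 0 := by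
    intro Z hZc hZm hZb
    let f : BoundedContinuousFunction (PathSp S) ℝ :=
      BoundedContinuousFunction.ofNormedAddCommGroup (fun ω => Z ω * (M t ω - M s ω))
        (hZc.mul hDc) (1 * (Kt + Ks)) fun ω => by
          rw [Real.norm_eq_abs, abs_mul]
          exact mul_le_mul (hZb ω) (hDb ω) (abs_nonneg _) zero_le_one
    have hlim := ProbabilityMeasure.tendsto_iff_forall_integral_tendsto.1 hP f
    have hzero : ∀ i, ∫ ω, f ω ∂(P i : Measure (PathSp S)) = 0 := by
      intro i
      have hi : ∀ t, Integrable (fun ω => Z ω * M t ω) (P i : Measure (PathSp S)) := fun t =>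
        (hint (P i) t).bdd_mul (c := 1) hZc.aestronglyMeasurable (Filter.Eventually.of_forall hZb)
      have h1 := martingale_test (hM i) hst hZm hZb
      rw [← sub_eq_zero, ← integral_sub (hi t) (hi s)] at h1
      rw [← h1]
      exact integral_congr_ae (Filter.Eventually.of_forall fun ω => mul_sub _ _ _)
    simp_rw [hzero] at hlim
    exact (tendsto_nhds_unique hlim tendsto_const_nhds)
  have hbasic : ∀ A ∈ approxSets S s, ∫ ω in A, (M t ω - M s ω) ∂(μ : Measure (PathSp S)) = 0 := by
    intro A hA
    obtain ⟨Z, h1, h2, h3, h4⟩ := id hA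
    rw [← integral_indicator (filtr_le s _ (approxSets_measurable hA))]
    have := tendsto_integral_of_dominated_convergence (μ := (μ : Measure (PathSp S)))
      (F := fun n ω => Z n ω * (M t ω - M s ω)) (f := A.indicator fun ω => M t ω - M s ω)
      (fun _ => Kt + Ks) (fun n => ((h1 n).mul hDc).aestronglyMeasurable) (integrable_const _)
      (fun n => Filter.Eventually.of_forall fun ω => ?_)
      (Filter.Eventually.of_forall fun ω => ?_)
    · simp_rw [fun n => htest (Z n) (h1 n) (h2 n) (h3 n)] at this
      exact (tendsto_nhds_unique this tendsto_const_nhds)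
    · rw [Real.norm_eq_abs, abs_mul, ← one_mul (Kt + Ks)]
      exact mul_le_mul (h3 n ω) (hDb ω) (abs_nonneg _) zero_le_one
    · have := (h4 ω).mul_const (M t ω - M s ω)
      convert this using 2
      by_cases hω : ω ∈ A <;> simp [hω]
  have hall : ∀ A, MeasurableSet[filtr S s] A →
      ∫ ω in A, (M t ω - M s ω) ∂(μ : Measure (PathSp S)) = 0 := by
    refine MeasurableSpace.induction_on_inter (m := filtr S s)
      (C := fun A _ => ∫ ω in A, (M t ω - M s ω) ∂(μ : Measure (PathSp S)) = 0)
      (filtr_eq_generateFrom s) (approxSets_pi s) (by simp) hbasic ?_ ?_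
    · intro A hA h0
      have h1 := integral_add_compl (filtr_le s _ hA) hDi
      have h2 := hbasic _ (univ_mem_approxSets s)
      rw [setIntegral_univ] at h2
      linarith
    · intro f hd hf h0
      rw [integral_iUnion (fun i => filtr_le s _ (hf i)) hd hDi.integrableOn]
      simp [h0]
  intro A hA
  have := hall A hA
  rwa [integral_sub (hint μ t).integrableOn (hint μ s).integrableOn, sub_eq_zero] at this

/-- Starting points pass to weak limits, by testing against the distance from `X_0` to the limit
point. -/
lemma startsAt_limit {ι : Type*} {U : Filter ι} [U.NeBot] {P : ι → ProbabilityMeasure (PathSp S)}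
    {μ : ProbabilityMeasure (PathSp S)} (hP : Filter.Tendsto P U (nhds μ))
    {x : ι → S → ℝ} {y : S → ℝ} (hx : Filter.Tendsto x U (nhds y))
    (hs : ∀ i, StartsAt (P i : Measure (PathSp S)) (x i)) :
    StartsAt (μ : Measure (PathSp S)) y := by
  have hg : ContinuousOn (fun z : S → ℝ => dist z y) (stdSimplex ℝ S) := by fun_prop
  have hc := eval_continuous hg 0
  obtain ⟨K, -, hK⟩ := simplex_bound hg
  have hev : Continuous fun ω : PathSp S => (ω 0 : S → ℝ) := by fun_prop
  have hms : ∀ z : S → ℝ, MeasurableSet {ω : PathSp S | (ω 0 : S → ℝ) = z} := fun z =>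
    hev.measurable (measurableSet_singleton z)
  let f : BoundedContinuousFunction (PathSp S) ℝ :=
    BoundedContinuousFunction.ofNormedAddCommGroup (fun ω => dist (ω 0 : S → ℝ) y) hc K
      fun ω => hK _ (ω 0).2
  have hlim := ProbabilityMeasure.tendsto_iff_forall_integral_tendsto.1 hP f
  have hval : ∀ i, ∫ ω, f ω ∂(P i : Measure (PathSp S)) = dist (x i) y := by
    intro i
    have h1 := (mem_ae_iff_prob_eq_one (hms (x i))).2 (hs i)
    have h2 : ∫ ω, f ω ∂(P i : Measure (PathSp S))
        = ∫ _, dist (x i) y ∂(P i : Measure (PathSp S)) := by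
      refine integral_congr_ae ?_
      filter_upwards [h1] with ω hω
      change dist (ω 0 : S → ℝ) y = _
      rw [hω]
    rw [h2]; simp
  simp_rw [hval] at hlim
  have h0 : ∫ ω : PathSp S, dist (ω 0 : S → ℝ) y ∂(μ : Measure (PathSp S)) = 0 :=
    tendsto_nhds_unique hlim (tendsto_iff_dist_tendsto_zero.1 hx)
  rw [integral_eq_zero_iff_of_nonneg (fun ω => dist_nonneg)
    (integrable_of_cont_bdd hc fun ω => hK _ (ω 0).2)] at h0
  refine (mem_ae_iff_prob_eq_one (hms y)).1 ?_
  filter_upwards [h0] with ω hω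
  exact dist_eq_zero.1 hω

/-- Feller continuity of the family {ℙ_x : x ∈ Σ} of solutions of the
𝔏-martingale problem: x_n → x implies weak convergence ℙ_{x_n} → ℙ_x. -/
theorem statement7
    (S : Type) [Fintype S] [DecidableEq S] (hS : 2 ≤ Fintype.card S)
    (r : S → S → ℝ) (hr : ∀ j k, 0 ≤ r j k) (hrdiag : ∀ j, r j j = 0)
    (hirr : IrreducibleRates r)
    (m : S → ℝ) (hm : ∀ j, 0 < m j)
    (hinv : ∀ f : S → ℝ, ∑ j, m j * gen r f j = 0)
    (b : ℝ) (hb : 1 < b)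
    (Pfam : (S → ℝ) → Measure (PathSp S))
    (hPfam : ∀ y ∈ stdSimplex ℝ S,
      IsProbabilityMeasure (Pfam y) ∧ StartsAt (Pfam y) y ∧ SolvesMP r m b (Pfam y))
    (huniq : ∀ y ∈ stdSimplex ℝ S, ∀ Q : Measure (PathSp S),
      IsProbabilityMeasure Q → StartsAt Q y → SolvesMP r m b Q → Q = Pfam y)
    (xseq : ℕ → (S → ℝ)) (hxseq : ∀ n, xseq n ∈ stdSimplex ℝ S)
    (x : S → ℝ) (hx : x ∈ stdSimplex ℝ S)
    (htend : Filter.Tendsto xseq Filter.atTop (nhds x)) :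
    ∀ f : BoundedContinuousFunction (PathSp S) ℝ,
      Filter.Tendsto (fun n => ∫ ω, f ω ∂(Pfam (xseq n))) Filter.atTop
        (nhds (∫ ω, f ω ∂(Pfam x))) := by
  have hne : Nonempty S := Fintype.card_pos_iff.1 (by omega)
  obtain ⟨C, hC⟩ := exists_comb_nonneg r hr hirr m hm hinv
  let P : ℕ → ProbabilityMeasure (PathSp S) := fun n =>
    ⟨Pfam (xseq n), (hPfam _ (hxseq n)).1⟩
  let Q : ProbabilityMeasure (PathSp S) := ⟨Pfam x, (hPfam x hx).1⟩
  have hcomp : IsCompact (closure {μ : ProbabilityMeasure (PathSp S) |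
      SolvesMP r m b (μ : Measure (PathSp S))}) := by
    refine isCompact_closure_of_isTightMeasureSet ((tight_solutions hr hC m b).subset ?_)
    rintro _ ⟨μ, hμ, rfl⟩
    exact ⟨μ.2, hμ⟩
  have hlim : Filter.Tendsto P Filter.atTop (nhds Q) := by
    refine hcomp.tendsto_nhds_of_unique_mapClusterPt
      (Filter.Eventually.of_forall fun n => subset_closure (hPfam _ (hxseq n)).2.2) fun μ _ hμ => ?_
    obtain ⟨U, hU, hUμ⟩ := mapClusterPt_iff_ultrafilter.1 hμ
    refine Subtype.ext (huniq x hx _ μ.2 ?_ fun H hH => ?_)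
    · exact startsAt_limit hUμ (htend.mono_left hU) fun n => (hPfam _ (hxseq n)).2.1
    · have hCH : ContDiff ℝ 2 H := (hH hne.some).1
      exact martingale_limit hUμ (fun t => martProc_continuous r m b hH hCH t)
        (fun t => martProc_bound r m b hH hCH t) (fun n => (hPfam _ (hxseq n)).2.2 H hH)
        ((hPfam x hx).2.2 H hH).2.1
  exact ProbabilityMeasure.tendsto_iff_forall_integral_tendsto.1 hlim
end
end

section
/- The family {ℙ_x : x ∈ Σ} is strong Markov: fix x ∈ Σ, let τ be a finite (𝓕_t)-stopping time and let (ℙ_ω^τ)_{ω} be a regular conditional probability distribution of ℙ_x given 𝓕_τ. Then there exists a ℙ_x-null set 𝓝 ∈ 𝓕_τ such that for every ω ∉ 𝓝, the pushforward of ℙ_ω^τ under the time shift θ_{τ(ω)} equals ℙ_{X_τ(ω)}. -/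
/-!
Why the strong Markov property holds: outside a null set of `𝓕_τ`, the law of `θ_τ` under the
conditional law `K ω` starts at `X_τ(ω)` and solves the martingale problem, so it is `ℙ_{X_τ(ω)}` by
uniqueness.

* Fix a pair `(H, 𝔏H)` and let `M` be its martingale. Both functions are continuous on the compact
  simplex, so `M_{τ+t} - M_{τ+s}` is bounded; discretizing `τ` from above and using dominated
  convergence shows that it integrates to zero over every event `B ∩ θ_τ⁻¹ A` with `B ∈ 𝓕_τ` and
  `A ∈ 𝓕_s` (`integral_increment_eq_zero`). By additivity this increment is `M_t - M_s` evaluated on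
  the shifted path. Disintegrating, for almost every `ω` the law of `θ_τ` under `K ω` satisfies the
  martingale identity for `(H, s, t, A)` (`ae_integral_eq_zero`).
* The exceptional set must not depend on `(H, s, t, A)`. The pairs `(H, 𝔏H)` form a subset of the
  separable space `C(Σ) × C(Σ)`, so a countable subset is dense among them for the uniform norm, under
  which the martingale identity is closed (`mart_of_mem_closure`). Times may be taken in a countable
  dense set, and events of the form `{stopped path at s ∈ U}` with `U` in a countable π-system
  (`mart_of_dense`); all events of `𝓕_s` are of this form with `U` Borel (`measurableSet_filtr_iff`).
* The variables `τ` and `X_τ` are `𝓕_τ`-measurable with values in second countable spaces, so under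
  `K ω` they are almost surely equal to `τ ω` and `X_τ(ω)` (`ae_eq_of_measurable_FstopNN`). This
  identifies the law of `θ_τ` with that of `θ_{τ(ω)}`, and gives the starting point.

Almost-everywhere statements are proved for the restriction of `ℙ_x` to `𝓕_τ` (the trimmed measure),
so that the final null set lies in `𝓕_τ`.
-/

open MeasureTheory Set
open scoped NNReal ENNReal

noncomputable section

variable {S : Type*} [Fintype S] [DecidableEq S]

/-- time shift θ_t on path space -/
def shiftPath (t : ℝ≥0) (ω : PathSp S) : PathSp S :=
  ω.comp ⟨fun s => t + s, by continuity⟩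

/-- the hitting time h_B = inf{t ≥ 0 : ∏_{j∈B} X_t(j) = 0} (with inf ∅ = ∞) -/
def hitB (B : Finset S) (ω : PathSp S) : ℝ≥0∞ :=
  sInf ((fun t : ℝ≥0 => (t : ℝ≥0∞)) '' {t | ∏ j ∈ B, (ω t : S → ℝ) j = 0})

open Classical in
/-- the pair (σ_n, 𝓑_n) defined recursively -/
def sigB : ℕ → PathSp S → ℝ≥0∞ × Finset S
  | 0, ω => (0, Finset.univ.filter fun j => 0 < (ω 0 : S → ℝ) j)
  | n + 1, ω =>
    let p := sigB n ω
    if p.1 < ⊤ then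
      let σ' := p.1 + hitB p.2 (shiftPath p.1.toNNReal ω)
      (σ', if σ' < ⊤ then Finset.univ.filter (fun j => 0 < (ω σ'.toNNReal : S → ℝ) j)
           else p.2)
    else (⊤, p.2)

/-- the absorption times σ_n -/
def sigmaT (n : ℕ) (ω : PathSp S) : ℝ≥0∞ := (sigB n ω).1

/-- the sets 𝓑_n -/
def Bn (n : ℕ) (ω : PathSp S) : Finset S := (sigB n ω).2

/-- μ is absorbing: for every n, a.s. the coordinates in 𝓐_n = 𝓑_nᶜ vanish for all t ≥ σ_n -/
def Absorbing (μ : Measure (PathSp S)) : Prop :=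
  ∀ n : ℕ,
    μ {ω : PathSp S | ∀ t : ℝ≥0, sigmaT n ω ≤ (t : ℝ≥0∞) →
        ∀ j, j ∉ Bn n ω → (ω t : S → ℝ) j = 0} = 1

/-- membership in the stopped σ-field 𝓕_τ associated to a finite random time τ -/
def MemFstopNN (τ : PathSp S → ℝ≥0) (A : Set (PathSp S)) : Prop :=
  MeasurableSet A ∧
  ∀ t : ℝ≥0, MeasurableSet[filtr S t] (A ∩ {ω : PathSp S | τ ω ≤ t})

/-- the stopped σ-field 𝓕_τ -/
def FstopNN (τ : PathSp S → ℝ≥0) : MeasurableSpace (PathSp S) :=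
  MeasurableSpace.generateFrom {A : Set (PathSp S) | MemFstopNN τ A}

/-! ### Path space: measurability and the stopped path -/

variable {T : Type*} [Fintype T]

instance : BorelSpace (PathSp T) := ⟨rfl⟩

/-- The Borel σ-algebra of the compact-open topology is generated by the evaluations: a map into
path space is measurable as soon as all its coordinates are. -/
theorem measurable_of_eval {Ω : Type*} {mΩ : MeasurableSpace Ω} {Φ : Ω → PathSp T}
    (h : ∀ u : ℝ≥0, Measurable fun a => ((Φ a u : T → ℝ))) : Measurable Φ := by
  have h' : ∀ u : ℝ≥0, Measurable fun a => Φ a u := fun u => (h u).subtype_mk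
  have e : (instMeasurableSpacePathSp : MeasurableSpace (PathSp T)) = MeasurableSpace.generateFrom _ :=
    borel_eq_generateFrom_of_subbasis
      (ContinuousMap.compactOpen_eq (X := ℝ≥0) (Y := ↥(stdSimplex ℝ T)))
  rw [e]
  refine measurable_generateFrom ?_
  rintro _ ⟨C, hC, U, hU, rfl⟩
  replace hC : IsCompact C := hC
  replace hU : IsOpen U := hU
  obtain ⟨D, hDc, hDd⟩ := TopologicalSpace.exists_countable_dense C
  -- `f` maps the compact set `C` into `U` iff the distance of `f` to `Uᶜ` is bounded below on `D`.
  have key : Φ ⁻¹' {f : PathSp T | MapsTo f C U} =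
      ⋃ n : ℕ, ⋂ k ∈ D, {a | ((n : ℝ≥0∞) + 1)⁻¹ ≤ Metric.infEDist (Φ a k) Uᶜ} := by
    ext a
    have hg : Continuous fun u => Metric.infEDist (Φ a u) Uᶜ :=
      Metric.continuous_infEDist.comp (Φ a).continuous
    have hpos : ∀ y, y ∈ U ↔ 0 < Metric.infEDist y Uᶜ := by
      intro y
      rw [pos_iff_ne_zero, Ne, ← Metric.mem_closure_iff_infEDist_zero,
        hU.isClosed_compl.closure_eq]
      simp
    simp only [mem_preimage, mem_ofPred_eq, mem_iUnion, mem_iInter]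
    constructor
    · intro hm
      rcases C.eq_empty_or_nonempty with rfl | hne
      · exact ⟨0, fun k _ => k.2.elim⟩
      · obtain ⟨u, huC, humin⟩ := hC.exists_isMinOn hne hg.continuousOn
        have h0 := (hpos _).1 (hm huC)
        obtain ⟨n, hn⟩ := ENNReal.exists_inv_nat_lt h0.ne'
        refine ⟨n, fun k _ => ?_⟩
        calc ((n : ℝ≥0∞) + 1)⁻¹ ≤ (n : ℝ≥0∞)⁻¹ := ENNReal.inv_le_inv.2 le_self_add
          _ ≤ _ := hn.le
          _ ≤ _ := humin k.2
    · rintro ⟨n, hn⟩ u hu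
      rw [hpos]
      have hcl : IsClosed {k : C | ((n : ℝ≥0∞) + 1)⁻¹ ≤ Metric.infEDist (Φ a k) Uᶜ} :=
        isClosed_le continuous_const (hg.comp continuous_subtype_val)
      have := hcl.closure_subset_iff.2 hn (hDd.closure_eq ▸ mem_univ (⟨u, hu⟩ : C))
      refine lt_of_lt_of_le ?_ this
      simp
  rw [key]
  refine MeasurableSet.iUnion fun n => MeasurableSet.biInter hDc fun k _ => ?_
  exact measurableSet_le measurable_const (measurable_infEDist.comp (h' k))

/-- The path stopped at the deterministic time `t`. -/
def stopP (t : ℝ≥0) (ω : PathSp T) : PathSp T :=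
  ω.comp ⟨fun s => min s t, by fun_prop⟩

@[simp] theorem stopP_apply (t u : ℝ≥0) (ω : PathSp T) : stopP t ω u = ω (min u t) := rfl

@[simp] theorem shiftPath_apply (t u : ℝ≥0) (ω : PathSp T) : shiftPath t ω u = ω (t + u) := rfl

theorem continuous_shiftPath : Continuous fun p : ℝ≥0 × PathSp T => shiftPath p.1 p.2 := by
  refine ContinuousMap.continuous_of_continuous_uncurry _ ?_
  change Continuous fun q : (ℝ≥0 × PathSp T) × ℝ≥0 => q.1.2 (q.1.1 + q.2)
  fun_prop

theorem filtr_le_s8 (t : ℝ≥0) : filtr T t ≤ (inferInstance : MeasurableSpace (PathSp T)) := by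
  refine iSup₂_le fun s _ => ?_
  rw [← measurable_iff_comap_le]
  have : Continuous fun ω : PathSp T => (ω s : T → ℝ) := by fun_prop
  exact this.measurable

theorem filtr_mono {s t : ℝ≥0} (h : s ≤ t) : filtr T s ≤ filtr T t :=
  iSup₂_le fun u hu => le_iSup₂_of_le u (le_trans hu h) le_rfl

theorem measurable_eval_filtr {u t : ℝ≥0} (h : u ≤ t) :
    Measurable[filtr T t] fun ω : PathSp T => (ω u : T → ℝ) := by
  rw [measurable_iff_comap_le]
  exact le_iSup₂_of_le u h le_rfl

theorem measurable_stopP (t : ℝ≥0) :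
    @Measurable _ _ (filtr T t) _ (stopP t : PathSp T → PathSp T) := by
  refine @measurable_of_eval T _ _ (filtr T t) (stopP t) fun u => ?_
  exact measurable_eval_filtr (min_le_right u t)

/-- Events of `𝓕_t` are exactly the events depending only on the path stopped at `t`. -/
theorem measurableSet_filtr_iff {t : ℝ≥0} {A : Set (PathSp T)} :
    MeasurableSet[filtr T t] A ↔ ∃ U : Set (PathSp T), MeasurableSet U ∧ stopP t ⁻¹' U = A := by
  constructor
  · intro h
    have : filtr T t ≤ MeasurableSpace.comap (stopP t) inferInstance := by
      refine iSup₂_le fun s hs => ?_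
      rintro _ ⟨V, hV, rfl⟩
      have hc : Continuous fun ω : PathSp T => (ω s : T → ℝ) := by fun_prop
      refine ⟨_, hc.measurable hV, ?_⟩
      ext ω
      simp [min_eq_left (show s ≤ t from hs)]
    exact this A h
  · rintro ⟨U, hU, rfl⟩
    exact measurable_stopP t hU

/-- A countable π-system generating the Borel σ-algebra of path space. -/
theorem exists_countable_piSystem :
    ∃ C : Set (Set (PathSp T)), C.Countable ∧ IsPiSystem C ∧ univ ∈ C ∧
      (inferInstance : MeasurableSpace (PathSp T)) = MeasurableSpace.generateFrom C := by
  have hB := TopologicalSpace.isBasis_countableBasis (PathSp T)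
  refine ⟨(fun f => ⋂₀ f) ''
    {f | f.Finite ∧ f ⊆ TopologicalSpace.countableBasis (PathSp T)},
    (Set.countable_ofPred_finite_subset (TopologicalSpace.countable_countableBasis _)).image _,
    ?_, ⟨∅, ⟨finite_empty, empty_subset _⟩, sInter_empty⟩, ?_⟩
  · rintro _ ⟨f, hf, rfl⟩ _ ⟨g, hg, rfl⟩ _
    exact ⟨f ∪ g, ⟨hf.1.union hg.1, union_subset hf.2 hg.2⟩, sInter_union _ _⟩
  · exact (TopologicalSpace.isTopologicalBasis_of_subbasis
      hB.eq_generateFrom).borel_eq_generateFrom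

/-! ### The compensated process attached to a pair of continuous functions -/

/-- A pair of continuous functions on the simplex, thought of as `(H, 𝔏H)`. -/
abbrev FunPair (T : Type*) [Fintype T] := C(↥(stdSimplex ℝ T), ℝ) × C(↥(stdSimplex ℝ T), ℝ)

/-- The process `h(X_t) - ∫₀ᵗ l(X_s) ds` attached to the pair `p = (h, l)`. -/
def dynkin_s8 (p : FunPair T) (t : ℝ≥0) (ω : PathSp T) : ℝ :=
  p.1 (ω t) - ∫ s in (0:ℝ)..t, p.2 (ω s.toNNReal)

theorem continuous_dynkin (p : FunPair T) :
    Continuous fun q : ℝ≥0 × PathSp T => dynkin_s8 p q.1 q.2 := by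
  unfold dynkin_s8
  refine Continuous.sub (by fun_prop) ?_
  refine intervalIntegral.continuous_parametric_intervalIntegral_of_continuous
    (f := fun (q : ℝ≥0 × PathSp T) s => p.2 (q.2 s.toNNReal)) ?_ (by fun_prop)
  change Continuous fun z : (ℝ≥0 × PathSp T) × ℝ => p.2 (z.1.2 z.2.toNNReal)
  have : Continuous fun z : (ℝ≥0 × PathSp T) × ℝ => z.2.toNNReal :=
    continuous_real_toNNReal.comp continuous_snd
  fun_prop

theorem continuous_dynkin_right (p : FunPair T) (t : ℝ≥0) : Continuous (dynkin_s8 p t) :=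
  (continuous_dynkin p).comp (Continuous.prodMk_right t)

theorem dynkin_stopP (p : FunPair T) (t : ℝ≥0) (ω : PathSp T) :
    dynkin_s8 p t (stopP t ω) = dynkin_s8 p t ω := by
  unfold dynkin_s8
  congr 1
  · simp
  · refine intervalIntegral.integral_congr fun s hs => ?_
    rw [uIcc_of_le t.coe_nonneg] at hs
    simp [min_eq_left (Real.toNNReal_le_iff_le_coe.2 hs.2)]

theorem measurable_dynkin (p : FunPair T) (t : ℝ≥0) : Measurable[filtr T t] (dynkin_s8 p t) := by
  have : dynkin_s8 p t = dynkin_s8 p t ∘ stopP t := funext fun ω => (dynkin_stopP p t ω).symm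
  rw [this]
  exact (continuous_dynkin_right p t).measurable.comp (measurable_stopP t)

theorem intervalIntegrable_path (l : C(↥(stdSimplex ℝ T), ℝ)) (ω : PathSp T) (a c : ℝ) :
    IntervalIntegrable (fun s : ℝ => l (ω s.toNNReal)) volume a c := by
  refine Continuous.intervalIntegrable ?_ _ _
  have := continuous_real_toNNReal
  fun_prop

theorem abs_dynkin_sub_le (p q : FunPair T) (t : ℝ≥0) (ω : PathSp T) :
    |dynkin_s8 p t ω - dynkin_s8 q t ω| ≤ (1 + t) * ‖p - q‖ := by
  have h1 : |p.1 (ω t) - q.1 (ω t)| ≤ ‖p - q‖ :=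
    ((p.1 - q.1).norm_coe_le_norm (ω t)).trans (norm_fst_le (p - q))
  have h2 : ‖∫ s in (0:ℝ)..t, (p.2 (ω s.toNNReal) - q.2 (ω s.toNNReal))‖
      ≤ ‖p - q‖ * |(t:ℝ) - 0| :=
    intervalIntegral.norm_integral_le_of_norm_le_const fun s _ =>
      ((p.2 - q.2).norm_coe_le_norm (ω s.toNNReal)).trans (norm_snd_le (p - q))
  rw [intervalIntegral.integral_sub (intervalIntegrable_path _ _ _ _)
    (intervalIntegrable_path _ _ _ _), sub_zero, abs_of_nonneg t.coe_nonneg, Real.norm_eq_abs] at h2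
  have e : dynkin_s8 p t ω - dynkin_s8 q t ω = (p.1 (ω t) - q.1 (ω t)) -
      ((∫ s in (0:ℝ)..t, p.2 (ω s.toNNReal)) - ∫ s in (0:ℝ)..t, q.2 (ω s.toNNReal)) := by
    unfold dynkin_s8; ring
  rw [e]
  refine (abs_sub _ _).trans ?_
  linarith

theorem abs_dynkin_le (p : FunPair T) (t : ℝ≥0) (ω : PathSp T) :
    |dynkin_s8 p t ω| ≤ (1 + t) * ‖p‖ := by
  simpa [dynkin_s8] using abs_dynkin_sub_le p 0 t ω

/-- Increments of the compensated process commute with time shifts. -/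
theorem dynkin_shift (p : FunPair T) (a s t : ℝ≥0) (ω : PathSp T) :
    dynkin_s8 p t (shiftPath a ω) - dynkin_s8 p s (shiftPath a ω) =
      dynkin_s8 p (a + t) ω - dynkin_s8 p (a + s) ω := by
  have key : ∀ u : ℝ≥0, dynkin_s8 p u (shiftPath a ω) =
      dynkin_s8 p (a + u) ω + ∫ v in (0:ℝ)..a, p.2 (ω v.toNNReal) := by
    intro u
    have h1 : ∫ v in (0:ℝ)..u, p.2 (shiftPath a ω v.toNNReal) =
        ∫ v in (0:ℝ)..u, p.2 (ω ((a:ℝ) + v).toNNReal) := by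
      refine intervalIntegral.integral_congr fun v hv => ?_
      rw [uIcc_of_le u.coe_nonneg] at hv
      simp [Real.toNNReal_add a.coe_nonneg hv.1]
    have h2 := intervalIntegral.integral_comp_add_left (a := 0) (b := (u:ℝ))
      (fun v => p.2 (ω v.toNNReal)) (a:ℝ)
    have h3 := intervalIntegral.integral_add_adjacent_intervals
      (intervalIntegrable_path p.2 ω 0 a) (intervalIntegrable_path p.2 ω a (a + u))
    unfold dynkin_s8
    rw [h1, h2, add_zero, NNReal.coe_add, ← h3, shiftPath_apply]
    ring
  rw [key, key]; ring

theorem integrable_dynkin (Q : Measure (PathSp T)) [IsFiniteMeasure Q] (p : FunPair T) (t : ℝ≥0) :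
    Integrable (dynkin_s8 p t) Q :=
  Integrable.of_bound (continuous_dynkin_right p t).measurable.aestronglyMeasurable
    ((1 + t) * ‖p‖) (Filter.Eventually.of_forall fun ω => abs_dynkin_le p t ω)

/-! ### Reducing the martingale property to countably many identities -/

/-- The martingale identity for the process `dynkin p` under `Q`. -/
def Mart (Q : Measure (PathSp T)) (p : FunPair T) : Prop :=
  ∀ s t : ℝ≥0, s ≤ t → ∀ A : Set (PathSp T), MeasurableSet[filtr T s] A →
    ∫ ω in A, dynkin_s8 p t ω ∂Q = ∫ ω in A, dynkin_s8 p s ω ∂Q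

/-- The martingale identity need only be tested at times of a dense set and on events from a
generating π-system. -/
theorem mart_of_dense (Q : Measure (PathSp T)) [IsProbabilityMeasure Q] (p : FunPair T)
    {D : Set ℝ≥0} (hD : Dense D) {C : Set (Set (PathSp T))} (hpi : IsPiSystem C)
    (huniv : univ ∈ C)
    (hgen : (inferInstance : MeasurableSpace (PathSp T)) = MeasurableSpace.generateFrom C)
    (h : ∀ s ∈ D, ∀ t ∈ D, s ≤ t → ∀ U ∈ C,
      ∫ ω in stopP s ⁻¹' U, (dynkin_s8 p t ω - dynkin_s8 p s ω) ∂Q = 0) : Mart Q p := by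
  have hst : ∀ s : ℝ≥0, Measurable (stopP s : PathSp T → PathSp T) := fun s =>
    (measurable_stopP s).mono (filtr_le_s8 s) le_rfl
  have hint : ∀ s t, Integrable (fun ω => dynkin_s8 p t ω - dynkin_s8 p s ω) Q := fun s t =>
    (integrable_dynkin Q p t).sub (integrable_dynkin Q p s)
  have h1 : ∀ s ∈ D, ∀ t ∈ D, s ≤ t → ∀ A, MeasurableSet[filtr T s] A →
      ∫ ω in A, dynkin_s8 p t ω ∂Q = ∫ ω in A, dynkin_s8 p s ω ∂Q := by
    intro s hs t ht hle A hA
    obtain ⟨U, hU, rfl⟩ := measurableSet_filtr_iff.1 hA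
    rw [← sub_eq_zero, ← integral_sub (integrable_dynkin Q p t).integrableOn
      (integrable_dynkin Q p s).integrableOn]
    induction U, hU using MeasurableSpace.induction_on_inter hgen hpi with
    | empty => simp
    | basic U hU => exact h s hs t ht hle U hU
    | compl U hU ih =>
      have e := h s hs t ht hle univ huniv
      rw [preimage_univ, setIntegral_univ] at e
      have := integral_add_compl (hst s hU) (hint s t)
      rw [preimage_compl]
      linarith [ih (hst s hU |> fun _ => measurableSet_filtr_iff.2 ⟨U, hU, rfl⟩)]
    | iUnion f hd hf ih =>
      rw [preimage_iUnion]
      have := hasSum_integral_iUnion (fun i => hst s (hf i))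
        (fun i j hij => (hd hij).preimage (stopP s)) (hint s t).integrableOn
      refine this.unique ?_
      simp_rw [fun i => ih i (measurableSet_filtr_iff.2 ⟨f i, hf i, rfl⟩)]
      exact hasSum_zero
  intro s t hle A hA
  -- `t ↦ ∫_A dynkin p t` is continuous, and constant on the points of `D` to the right of `s`.
  have hcont : Continuous fun t => ∫ ω in A, dynkin_s8 p t ω ∂Q := by
    refine continuous_iff_continuousAt.2 fun t₀ => ?_
    refine continuousAt_of_dominated (bound := fun _ => (1 + (t₀ + 1 : ℝ≥0)) * ‖p‖)
      (Filter.Eventually.of_forall fun t =>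
        (continuous_dynkin_right p t).measurable.aestronglyMeasurable) ?_
      (integrable_const _) (Filter.Eventually.of_forall fun ω =>
        ((continuous_dynkin p).comp (Continuous.prodMk_left ω)).continuousAt)
    have : Iio (t₀ + 1) ∈ nhds t₀ := Iio_mem_nhds (by simp)
    filter_upwards [this] with t ht
    refine Filter.Eventually.of_forall fun ω => (abs_dynkin_le p t ω).trans ?_
    have : (t : ℝ) ≤ (t₀ + 1 : ℝ≥0) := NNReal.coe_le_coe.2 (le_of_lt ht)
    gcongr
  have hcl : ∀ u, s ≤ u → u ∈ closure (Ioi s ∩ D) := by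
    intro u hu
    have h2 := closure_mono (hD.open_subset_closure_inter (isOpen_Ioi (a := s)))
    rw [closure_closure, closure_Ioi] at h2
    exact h2 hu
  obtain ⟨q, hqs, hqD⟩ : (Ioi s ∩ D).Nonempty := by
    rw [← closure_nonempty_iff]; exact ⟨s, hcl s le_rfl⟩
  have hconst : ∀ u, s ≤ u → ∫ ω in A, dynkin_s8 p u ω ∂Q = ∫ ω in A, dynkin_s8 p q ω ∂Q := by
    intro u hu
    have hcs : IsClosed {u | ∫ ω in A, dynkin_s8 p u ω ∂Q = ∫ ω in A, dynkin_s8 p q ω ∂Q} :=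
      isClosed_eq hcont continuous_const
    refine hcs.closure_subset_iff.2 ?_ (hcl u hu)
    rintro v ⟨hv, hvD⟩
    rcases le_total v q with hvq | hvq
    · exact (h1 v hvD q hqD hvq A (filtr_mono (le_of_lt hv) A hA)).symm
    · exact h1 q hqD v hvD hvq A (filtr_mono (le_of_lt hqs) A hA)
  rw [hconst t hle, hconst s le_rfl]

/-- The martingale identity is preserved under uniform limits of pairs `(h, l)`. -/
theorem mart_of_mem_closure (Q : Measure (PathSp T)) [IsProbabilityMeasure Q]
    {E : Set (FunPair T)} (hE : ∀ p ∈ E, Mart Q p) {p : FunPair T} (hp : p ∈ closure E) :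
    Mart Q p := by
  intro s t hle A hA
  have hcont : ∀ t : ℝ≥0, Continuous fun p : FunPair T => ∫ ω in A, dynkin_s8 p t ω ∂Q := by
    intro t
    refine (LipschitzWith.of_dist_le_mul (K := 1 + t) fun p q => ?_).continuous
    rw [dist_eq_norm, dist_eq_norm, ← integral_sub (integrable_dynkin Q p t).integrableOn
      (integrable_dynkin Q q t).integrableOn]
    refine (norm_integral_le_of_norm_le_const
      (Filter.Eventually.of_forall fun ω => abs_dynkin_sub_le p q t ω)).trans ?_
    have h1 : (Q.restrict A).real univ ≤ 1 := by
      simp [measureReal_le_one]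
    push_cast
    exact mul_le_of_le_one_right (by positivity) h1
  exact (isClosed_eq (hcont t) (hcont s)).closure_subset_iff.2
    (fun q hq => hE q hq s t hle A hA) hp

/-! ### The martingale problem in terms of pairs -/

/-- For `H` in the domain, `(H, 𝔏H)` restricts to a pair of continuous functions on the simplex. -/
theorem exists_funPair (r : S → S → ℝ) (m : S → ℝ) (b : ℝ) (H : (S → ℝ) → ℝ)
    (hH : ∀ j : S, memD r j H) :
    ∃ p : FunPair S, (∀ y, p.1 y = H y) ∧ ∀ y, p.2 y = Lop r m b H y := by
  rcases isEmpty_or_nonempty S with hS | ⟨⟨j₀⟩⟩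
  · have : IsEmpty ↥(stdSimplex ℝ S) := ⟨fun y => by simpa using y.2.2⟩
    exact ⟨0, fun y => (this.false y).elim, fun y => (this.false y).elim⟩
  have hC : ContDiff ℝ 2 H := (hH j₀).1
  have hfd : ∀ d : S → ℝ, ContDiff ℝ 1 fun y => fderiv ℝ H y d := fun d =>
    (hC.fderiv_right (m := 1) (by norm_num)).clm_apply contDiff_const
  have hsec : ∀ d : S → ℝ, Continuous (secondD H d) := fun d =>
    (((hfd d).continuous_fderiv (by norm_num)).clm_apply continuous_const)
  have hL : ContinuousOn (Lop r m b H) (stdSimplex ℝ S) := by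
    have e : ∀ x ∈ stdSimplex ℝ S, Lop r m b H x =
        b * ∑ j, m j * (if 0 < x j then fderiv ℝ H x (vvec r j) / x j else 0)
        + (1 / 2) * ∑ j, ∑ k, m j * r j k * secondD H (ebasis k - ebasis j) x := by
      intro x hx
      unfold Lop
      congr 2
      refine Finset.sum_congr rfl fun j _ => ?_
      rcases (hx.1 j).eq_or_lt with h | h
      · simp [← h]
      · rw [if_pos h, if_pos h.ne']; ring
    refine ContinuousOn.congr ?_ e
    refine ContinuousOn.add ?_ (Continuous.continuousOn ?_)
    · refine continuousOn_const.mul (continuousOn_finsetSum _ fun j _ => ?_)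
      exact continuousOn_const.mul (hH j).2
    · refine continuous_const.mul (continuous_finsetSum _ fun j _ =>
        continuous_finsetSum _ fun k _ => continuous_const.mul (hsec _))
  exact ⟨(⟨fun y => H y, hC.continuous.comp continuous_subtype_val⟩,
    ⟨fun y => Lop r m b H y, hL.domRestrict⟩), fun _ => rfl, fun _ => rfl⟩

theorem martProc_eq_dynkin {r : S → S → ℝ} {m : S → ℝ} {b : ℝ} {H : (S → ℝ) → ℝ}
    {p : FunPair S} (h1 : ∀ y, p.1 y = H y) (h2 : ∀ y, p.2 y = Lop r m b H y) :
    martProc r m b H = dynkin_s8 p := by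
  funext t ω
  unfold martProc dynkin_s8
  rw [intervalIntegral.integral_of_le t.coe_nonneg, integral_Icc_eq_integral_Ioc, h1]
  simp_rw [h2]

theorem isMartingale_dynkin_iff (Q : Measure (PathSp T)) [IsProbabilityMeasure Q]
    (p : FunPair T) : IsMartingale Q (dynkin_s8 p) ↔ Mart Q p :=
  ⟨fun h => h.2.2, fun h => ⟨integrable_dynkin Q p, measurable_dynkin p, h⟩⟩

/-- The set of pairs `(H, 𝔏H)` with `H` in the domain. -/
def pairSet (r : S → S → ℝ) (m : S → ℝ) (b : ℝ) : Set (FunPair S) :=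
  {p | ∃ H : (S → ℝ) → ℝ, (∀ j : S, memD r j H) ∧ (∀ y, p.1 y = H y) ∧
    ∀ y, p.2 y = Lop r m b H y}

theorem solvesMP_iff (r : S → S → ℝ) (m : S → ℝ) (b : ℝ) (Q : Measure (PathSp S))
    [IsProbabilityMeasure Q] : SolvesMP r m b Q ↔ ∀ p ∈ pairSet r m b, Mart Q p := by
  constructor
  · rintro h p ⟨H, hH, h1, h2⟩
    rw [← isMartingale_dynkin_iff, ← martProc_eq_dynkin h1 h2]
    exact h H hH
  · intro h H hH
    obtain ⟨p, h1, h2⟩ := exists_funPair r m b H hH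
    rw [martProc_eq_dynkin h1 h2, isMartingale_dynkin_iff]
    exact h p ⟨H, hH, h1, h2⟩

/-! ### Stopping times -/

section Stopping

variable {τ : PathSp T → ℝ≥0}
  (hτ : ∀ t : ℝ≥0, MeasurableSet[filtr T t] {ω : PathSp T | τ ω ≤ t})

include hτ

theorem measurable_tau : Measurable τ :=
  measurable_of_Iic fun t => filtr_le_s8 t _ (hτ t)

theorem measurable_min_tau (q : ℝ≥0) : Measurable[filtr T q] fun ω => min (τ ω) q := by
  refine @measurable_of_Iic _ _ _ _ _ (filtr T q) _ _ _ _ fun c => ?_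
  rcases le_or_gt q c with h | h
  · convert @MeasurableSet.univ _ (filtr T q)
    ext ω
    simp [h]
  · convert filtr_mono h.le _ (hτ c) using 1
    ext ω
    simp [h.not_ge]

/-- Measurable sets of the generated σ-algebra `FstopNN τ` are themselves events of `𝓕_τ`: these
events already form a σ-algebra. -/
theorem memFstop_of_measurableSet {A : Set (PathSp T)} (hA : MeasurableSet[FstopNN τ] A) :
    MemFstopNN τ A := by
  induction A, hA using MeasurableSpace.generateFrom_induction with
  | hC A hA _ => exact hA
  | empty => exact ⟨.empty, fun t => by simp⟩
  | compl A _ ih =>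
    refine ⟨ih.1.compl, fun t => ?_⟩
    have : Aᶜ ∩ {ω | τ ω ≤ t} = {ω | τ ω ≤ t} \ (A ∩ {ω | τ ω ≤ t}) := by
      ext ω; simp; tauto
    rw [this]
    exact (hτ t).diff (ih.2 t)
  | iUnion f _ ih =>
    refine ⟨.iUnion fun n => (ih n).1, fun t => ?_⟩
    rw [iUnion_inter]
    exact MeasurableSet.iUnion fun n => (ih n).2 t

omit hτ in
theorem measurableSet_of_memFstop {A : Set (PathSp T)} (hA : MemFstopNN τ A) :
    MeasurableSet[FstopNN τ] A :=
  MeasurableSpace.measurableSet_generateFrom hA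

theorem FstopNN_le : FstopNN τ ≤ (inferInstance : MeasurableSpace (PathSp T)) :=
  fun _ hA => (memFstop_of_measurableSet hτ hA).1

/-- A map that coincides on each `{τ ≤ q}` with an `𝓕_q`-measurable map is `𝓕_τ`-measurable. -/
theorem measurable_FstopNN {E : Type*} [MeasurableSpace E] {Y : PathSp T → E}
    (hY : Measurable Y)
    (h : ∀ q : ℝ≥0, ∃ Z : PathSp T → E, Measurable[filtr T q] Z ∧ ∀ ω, τ ω ≤ q → Y ω = Z ω) :
    Measurable[FstopNN τ] Y := by
  intro V hV
  refine measurableSet_of_memFstop ⟨hY hV, fun q => ?_⟩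
  obtain ⟨Z, hZ, hYZ⟩ := h q
  have : Y ⁻¹' V ∩ {ω | τ ω ≤ q} = Z ⁻¹' V ∩ {ω | τ ω ≤ q} := by
    ext ω
    simp only [mem_inter_iff, mem_preimage, mem_ofPred_eq]
    exact and_congr_left fun hω => by rw [hYZ ω hω]
  rw [this]
  exact (hZ hV).inter (hτ q)

theorem measurable_tau_FstopNN : Measurable[FstopNN τ] τ :=
  measurable_FstopNN hτ (measurable_tau hτ) fun q =>
    ⟨_, measurable_min_tau hτ q, fun _ h => (min_eq_left h).symm⟩

theorem measurable_eval_tau : Measurable fun ω : PathSp T => ω (τ ω) := by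
  have hc : Continuous fun p : ℝ≥0 × PathSp T => p.2 p.1 := by fun_prop
  exact hc.measurable.comp ((measurable_tau hτ).prodMk measurable_id)

theorem measurable_eval_tau_FstopNN : Measurable[FstopNN τ] fun ω : PathSp T => ω (τ ω) := by
  refine measurable_FstopNN hτ (measurable_eval_tau hτ) fun q => ?_
  have hc : Continuous fun p : ℝ≥0 × PathSp T => p.2 p.1 := by fun_prop
  refine ⟨fun ω => stopP q ω (min (τ ω) q),
    hc.measurable.comp ((measurable_min_tau hτ q).prodMk (measurable_stopP q)), fun ω h => ?_⟩
  simp [min_eq_left h]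

/-- The shifted path `θ_τ ω` depends measurably on `ω`. -/
theorem measurable_shift_tau : Measurable fun ω : PathSp T => shiftPath (τ ω) ω :=
  continuous_shiftPath.measurable.comp ((measurable_tau hτ).prodMk measurable_id)

/-- If `B ∈ 𝓕_τ` and `A ∈ 𝓕_s`, then `B ∩ θ_τ⁻¹ A` belongs to `𝓕_{τ+s}`. -/
theorem measurableSet_inter_shift {B : Set (PathSp T)} (hB : MemFstopNN τ B) (s : ℝ≥0)
    {U : Set (PathSp T)} (hU : MeasurableSet U) (q : ℝ≥0) :
    MeasurableSet[filtr T (q + s)]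
      (B ∩ {ω | stopP s (shiftPath (τ ω) ω) ∈ U} ∩ {ω | τ ω ≤ q}) := by
  have hle : filtr T q ≤ filtr T (q + s) := filtr_mono le_self_add
  have hZ : Measurable[filtr T (q + s)] fun ω : PathSp T =>
      stopP s (shiftPath (min (τ ω) q) (stopP (q + s) ω)) :=
    ((measurable_stopP s).mono (filtr_le_s8 s) le_rfl).comp (continuous_shiftPath.measurable.comp
      (((measurable_min_tau hτ q).mono hle le_rfl).prodMk (measurable_stopP (q + s))))
  have e : B ∩ {ω | stopP s (shiftPath (τ ω) ω) ∈ U} ∩ {ω | τ ω ≤ q} =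
      (B ∩ {ω | τ ω ≤ q}) ∩
        (fun ω => stopP s (shiftPath (min (τ ω) q) (stopP (q + s) ω))) ⁻¹' U := by
    ext ω
    simp only [mem_inter_iff, mem_preimage, mem_ofPred_eq]
    have : τ ω ≤ q → stopP s (shiftPath (min (τ ω) q) (stopP (q + s) ω)) =
        stopP s (shiftPath (τ ω) ω) := by
      intro h
      ext1 u
      have : τ ω + min u s ≤ q + s := add_le_add h (min_le_right _ _)
      simp [min_eq_left h, min_eq_left this]
    constructor
    · rintro ⟨⟨h1, h2⟩, h3⟩
      exact ⟨⟨h1, h3⟩, by rwa [this h3]⟩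
    · rintro ⟨⟨h1, h3⟩, h2⟩
      exact ⟨⟨h1, by rwa [this h3] at h2⟩, h3⟩
  rw [e]
  exact (hle _ (hB.2 q)).inter (hZ hU)

/-- Optional stopping for increments after `τ`. The increment over `[τ + s, τ + t]` is bounded, so
that no integrability of `τ` is needed. -/
theorem integral_increment_eq_zero (Q : Measure (PathSp T)) [IsProbabilityMeasure Q]
    {p : FunPair T} (hp : Mart Q p) {s t : ℝ≥0} (hst : s ≤ t) {G : Set (PathSp T)}
    (hGm : MeasurableSet G)
    (hG : ∀ q : ℝ≥0, MeasurableSet[filtr T (q + s)] (G ∩ {ω | τ ω ≤ q})) :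
    ∫ ω in G, (dynkin_s8 p t (shiftPath (τ ω) ω) - dynkin_s8 p s (shiftPath (τ ω) ω)) ∂Q = 0 := by
  set F : ℝ≥0 × PathSp T → ℝ :=
    fun z => dynkin_s8 p t (shiftPath z.1 z.2) - dynkin_s8 p s (shiftPath z.1 z.2) with hF
  have hFc : Continuous F :=
    ((continuous_dynkin_right p t).comp continuous_shiftPath).sub
      ((continuous_dynkin_right p s).comp continuous_shiftPath)
  have hFb : ∀ z, ‖F z‖ ≤ (1 + t) * ‖p‖ + (1 + s) * ‖p‖ := fun z =>
    (abs_sub _ _).trans (add_le_add (abs_dynkin_le p t _) (abs_dynkin_le p s _))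
  -- approximation of `τ` from above by times with values in a lattice
  set σ : ℕ → PathSp T → ℝ≥0 := fun n ω => (⌈τ ω * (n + 1)⌉₊ : ℝ≥0) / (n + 1) with hσ
  have hσm : ∀ n, Measurable (σ n) := fun n =>
    (measurable_from_top.comp (Nat.measurable_ceil.comp
      ((measurable_tau hτ).mul_const _))).div_const _
  have hσlim : ∀ ω, Filter.Tendsto (fun n => σ n ω) Filter.atTop (nhds (τ ω)) := by
    intro ω
    have hup : Filter.Tendsto (fun n : ℕ => τ ω + 1 / ((n : ℝ≥0) + 1)) Filter.atTop
        (nhds (τ ω)) := by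
      simpa using (tendsto_one_div_add_atTop_nhds_zero_nat (𝕜 := ℝ≥0)).const_add (τ ω)
    refine tendsto_of_tendsto_of_tendsto_of_le_of_le tendsto_const_nhds hup (fun n => ?_)
      (fun n => ?_)
    · simp only [hσ]
      rw [le_div_iff₀ (by positivity)]
      exact Nat.le_ceil _
    · simp only [hσ]
      rw [div_le_iff₀ (by positivity), add_mul, one_div_mul_cancel (by positivity)]
      exact (Nat.ceil_lt_add_one zero_le).le
  have hσ0 : ∀ n, ∫ ω in G, F (σ n ω, ω) ∂Q = 0 := by
    intro n
    set P : ℕ → Set (PathSp T) := fun k => G ∩ {ω | ⌈τ ω * (n + 1)⌉₊ = k} with hP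
    have hPU : ⋃ k, P k = G := by
      ext ω; simp [hP]
    have hPm : ∀ k, MeasurableSet (P k) := fun k =>
      hGm.inter ((Nat.measurable_ceil.comp ((measurable_tau hτ).mul_const _))
        (measurableSet_singleton k))
    have hPd : Pairwise (Function.onFun Disjoint P) := by
      intro i j hij
      refine Set.disjoint_left.2 fun ω hi hj => hij ?_
      exact hi.2.symm.trans hj.2
    have hsum := hasSum_integral_iUnion (μ := Q) (f := fun ω => F (σ n ω, ω)) hPm hPd
      (Integrable.of_bound
        (hFc.measurable.comp ((hσm n).prodMk measurable_id)).aestronglyMeasurable _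
        (Filter.Eventually.of_forall fun ω => hFb _)).integrableOn
    rw [hPU] at hsum
    refine hsum.unique ?_
    convert hasSum_zero with k
    set q : ℝ≥0 := (k : ℝ≥0) / (n + 1) with hq
    have hPk : MeasurableSet[filtr T (q + s)] (P k) := by
      have hle : filtr T q ≤ filtr T (q + s) := filtr_mono le_self_add
      have e : P k = (G ∩ {ω | τ ω ≤ q}) ∩
          (fun ω => ⌈min (τ ω) q * (n + 1)⌉₊) ⁻¹' {k} := by
        ext ω
        simp only [hP, mem_inter_iff, mem_preimage, mem_ofPred_eq, mem_singleton_iff]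
        constructor
        · rintro ⟨h1, h2⟩
          have h3 : τ ω ≤ q := by
            rw [hq, le_div_iff₀ (by positivity), ← h2]
            exact Nat.le_ceil _
          exact ⟨⟨h1, h3⟩, by rwa [min_eq_left h3]⟩
        · rintro ⟨⟨h1, h3⟩, h2⟩
          exact ⟨h1, by rwa [min_eq_left h3] at h2⟩
      rw [e]
      refine (hG q).inter (hle _ ?_)
      exact (Nat.measurable_ceil.comp ((measurable_min_tau hτ q).mul_const _))
        (measurableSet_singleton k)
    have hcongr : ∫ ω in P k, F (σ n ω, ω) ∂Q =
        ∫ ω in P k, (dynkin_s8 p (q + t) ω - dynkin_s8 p (q + s) ω) ∂Q := by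
      refine setIntegral_congr_fun (hPm k) fun ω hω => ?_
      have : σ n ω = q := by
        simp only [hσ, hq]
        rw [hω.2]
      simp only [hF, this, dynkin_shift]
    rw [hcongr, integral_sub (integrable_dynkin Q p _).integrableOn
      (integrable_dynkin Q p _).integrableOn, sub_eq_zero]
    exact hp _ _ (add_le_add le_rfl hst) _ hPk
  have hlim : Filter.Tendsto (fun n => ∫ ω in G, F (σ n ω, ω) ∂Q) Filter.atTop
      (nhds (∫ ω in G, F (τ ω, ω) ∂Q)) := by
    refine tendsto_integral_of_dominated_convergence
      (fun _ => (1 + t) * ‖p‖ + (1 + s) * ‖p‖)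
      (fun n => (hFc.measurable.comp ((hσm n).prodMk measurable_id)).aestronglyMeasurable)
      (integrable_const _) (fun n => Filter.Eventually.of_forall fun ω => hFb _)
      (Filter.Eventually.of_forall fun ω => ?_)
    exact (hFc.tendsto _).comp ((hσlim ω).prodMk_nhds tendsto_const_nhds)
  simp_rw [hσ0] at hlim
  exact tendsto_nhds_unique hlim tendsto_const_nhds

end Stopping

/-! ### Consequences of the disintegration -/

open ProbabilityTheory in
/-- The disintegration identity, extended from events to bounded measurable functions. -/
theorem setIntegral_disintegration {τ : PathSp T → ℝ≥0}
    (hτ : ∀ t : ℝ≥0, MeasurableSet[filtr T t] {ω : PathSp T | τ ω ≤ t})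
    {P : Measure (PathSp T)} [IsProbabilityMeasure P] {K : PathSp T → Measure (PathSp T)}
    (hKmeas : ∀ A : Set (PathSp T), MeasurableSet A →
      @Measurable _ _ (FstopNN τ) _ (fun ω => K ω A))
    (hKdis : ∀ A : Set (PathSp T), MeasurableSet A →
      ∀ Bs : Set (PathSp T), MemFstopNN τ Bs → P (A ∩ Bs) = ∫⁻ ω in Bs, K ω A ∂P)
    {f : PathSp T → ℝ} (hf : Integrable f P) {B : Set (PathSp T)} (hB : MemFstopNN τ B) :
    ∫ ω in B, f ω ∂P = ∫ ω in B, ∫ ω', f ω' ∂(K ω) ∂P := by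
  let κ : Kernel (PathSp T) (PathSp T) := ⟨K, Measure.measurable_of_measurable_coe _
    fun A hA => (hKmeas A hA).mono (FstopNN_le hτ) le_rfl⟩
  have e : (κ ∘ₖ Kernel.const Unit (P.restrict B)) () = P.restrict B := by
    ext A hA
    rw [Kernel.comp_apply' _ _ _ hA, Kernel.const_apply, Measure.restrict_apply hA]
    exact (hKdis A hA B hB).symm
  have := Kernel.integral_comp (η := κ) (κ := Kernel.const Unit (P.restrict B)) (a := ())
    (f := f) (by rw [e]; exact hf.integrableOn)
  rw [e, Kernel.const_apply] at this
  exact this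

open ProbabilityTheory in
/-- If a bounded `f` integrates to zero over all events of `𝓕_τ`, then its conditional means
vanish outside a null set of `𝓕_τ`. -/
theorem ae_integral_eq_zero {τ : PathSp T → ℝ≥0}
    (hτ : ∀ t : ℝ≥0, MeasurableSet[filtr T t] {ω : PathSp T | τ ω ≤ t})
    {P : Measure (PathSp T)} [IsProbabilityMeasure P] {K : PathSp T → Measure (PathSp T)}
    (hKprob : ∀ ω, IsProbabilityMeasure (K ω))
    (hKmeas : ∀ A : Set (PathSp T), MeasurableSet A →
      @Measurable _ _ (FstopNN τ) _ (fun ω => K ω A))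
    (hKdis : ∀ A : Set (PathSp T), MeasurableSet A →
      ∀ Bs : Set (PathSp T), MemFstopNN τ Bs → P (A ∩ Bs) = ∫⁻ ω in Bs, K ω A ∂P)
    {f : PathSp T → ℝ} (hf : Measurable f) {c : ℝ} (hc : ∀ ω, ‖f ω‖ ≤ c)
    (h0 : ∀ B, MemFstopNN τ B → ∫ ω in B, f ω ∂P = 0) :
    ∀ᵐ ω ∂(P.trim (FstopNN_le hτ)), ∫ ω', f ω' ∂(K ω) = 0 := by
  let κ : @Kernel (PathSp T) (PathSp T) (FstopNN τ) _ :=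
    @Kernel.mk _ _ (FstopNN τ) _ K (@Measure.measurable_of_measurable_coe _ _ _ (FstopNN τ) _ hKmeas)
  have hg : StronglyMeasurable[FstopNN τ] fun ω => ∫ ω', f ω' ∂(K ω) :=
    @StronglyMeasurable.integral_kernel _ _ (FstopNN τ) _ κ _ _ _ f hf.stronglyMeasurable
  have hgb : ∀ ω, ‖∫ ω', f ω' ∂(K ω)‖ ≤ c := fun ω => by
    have := hKprob ω
    simpa using norm_integral_le_of_norm_le_const (μ := K ω) (Filter.Eventually.of_forall hc)
  have hgi : Integrable (fun ω => ∫ ω', f ω' ∂(K ω)) P :=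
    Integrable.of_bound (hg.mono (FstopNN_le hτ)).aestronglyMeasurable c
      (Filter.Eventually.of_forall hgb)
  have hfi : Integrable f P :=
    Integrable.of_bound hf.aestronglyMeasurable c (Filter.Eventually.of_forall hc)
  refine (StronglyMeasurable.ae_eq_trim_iff (FstopNN_le hτ) hg
    (@stronglyMeasurable_const _ _ (FstopNN τ) _ (0 : ℝ))).2 ?_
  refine ae_eq_of_forall_setIntegral_eq_of_sigmaFinite' (FstopNN_le hτ)
    (fun _ _ _ => hgi.integrableOn) (fun _ _ _ => integrableOn_zero) (fun B hB _ => ?_)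
    hg.aestronglyMeasurable (@stronglyMeasurable_const _ _ (FstopNN τ) _ (0 : ℝ)).aestronglyMeasurable
  have hB' := memFstop_of_measurableSet hτ hB
  rw [← setIntegral_disintegration hτ hKmeas hKdis hfi hB', h0 B hB']
  simp

/-- Outside a null set of `𝓕_τ`, an `𝓕_τ`-measurable variable `Y` is constant, equal to `Y ω`, under
the conditional law given `ω`. -/
theorem ae_eq_of_measurable_FstopNN {τ : PathSp T → ℝ≥0}
    (hτ : ∀ t : ℝ≥0, MeasurableSet[filtr T t] {ω : PathSp T | τ ω ≤ t})
    {P : Measure (PathSp T)} {K : PathSp T → Measure (PathSp T)}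
    (hKmeas : ∀ A : Set (PathSp T), MeasurableSet A →
      @Measurable _ _ (FstopNN τ) _ (fun ω => K ω A))
    (hKind : ∀ Bs : Set (PathSp T), MemFstopNN τ Bs →
      ∀ᵐ ω ∂P, K ω Bs = Bs.indicator (fun _ => (1 : ℝ≥0∞)) ω)
    {E : Type*} [TopologicalSpace E] [SecondCountableTopology E] [T1Space E] [MeasurableSpace E]
    [BorelSpace E] {Y : PathSp T → E} (hY : Measurable[FstopNN τ] Y) :
    ∀ᵐ ω ∂(P.trim (FstopNN_le hτ)), ∀ᵐ ω' ∂(K ω), Y ω' = Y ω := by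
  have hbc := TopologicalSpace.countable_countableBasis E
  have hb := TopologicalSpace.isBasis_countableBasis E
  have h1 : ∀ᵐ ω ∂(P.trim (FstopNN_le hτ)), ∀ U ∈ TopologicalSpace.countableBasis E,
      K ω (Y ⁻¹' U) = (Y ⁻¹' U).indicator (fun _ => (1 : ℝ≥0∞)) ω := by
    rw [ae_ball_iff hbc]
    intro U hU
    have hm : MeasurableSet[FstopNN τ] (Y ⁻¹' U) := hY (hb.isOpen hU).measurableSet
    have hmem := memFstop_of_measurableSet hτ hm
    exact (StronglyMeasurable.ae_eq_trim_iff (FstopNN_le hτ)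
      (hKmeas _ hmem.1).stronglyMeasurable
      (Measurable.indicator measurable_const hm).stronglyMeasurable).2 (hKind _ hmem)
  filter_upwards [h1] with ω hω
  have hsub : {ω' | ¬ Y ω' = Y ω} ⊆
      ⋃ U ∈ {U ∈ TopologicalSpace.countableBasis E | Y ω ∉ U}, Y ⁻¹' U := by
    intro ω' hne
    obtain ⟨U, hU, h3, h4⟩ := hb.exists_subset_of_mem_open
      (show Y ω' ∈ ({Y ω}ᶜ : Set E) from hne) isOpen_compl_singleton
    refine mem_iUnion₂.2 ⟨U, ⟨hU, fun h => h4 h rfl⟩, h3⟩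
  refine measure_mono_null hsub ((measure_biUnion_null_iff (hbc.mono (sep_subset _ _))).2 ?_)
  rintro U ⟨hU, hn⟩
  rw [hω U hU]
  exact indicator_of_notMem (show ω ∉ Y ⁻¹' U from hn) _

/-- the strong Markov property of the family {ℙ_y : y ∈ Σ}. -/
theorem statement8
    (S : Type) [Fintype S] [DecidableEq S] (hS : 2 ≤ Fintype.card S)
    (r : S → S → ℝ) (hr : ∀ j k, 0 ≤ r j k) (hrdiag : ∀ j, r j j = 0)
    (hirr : IrreducibleRates r)
    (m : S → ℝ) (hm : ∀ j, 0 < m j)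
    (hinv : ∀ f : S → ℝ, ∑ j, m j * gen r f j = 0)
    (b : ℝ) (hb : 1 < b)
    (Pfam : (S → ℝ) → Measure (PathSp S))
    (hPfam : ∀ y ∈ stdSimplex ℝ S,
      IsProbabilityMeasure (Pfam y) ∧ StartsAt (Pfam y) y ∧ SolvesMP r m b (Pfam y))
    (huniq : ∀ y ∈ stdSimplex ℝ S, ∀ Q : Measure (PathSp S),
      IsProbabilityMeasure Q → StartsAt Q y → SolvesMP r m b Q → Q = Pfam y)
    (x : S → ℝ) (hx : x ∈ stdSimplex ℝ S)
    (τ : PathSp S → ℝ≥0)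
    (hτ : ∀ t : ℝ≥0, MeasurableSet[filtr S t] {ω : PathSp S | τ ω ≤ t})
    (K : PathSp S → Measure (PathSp S))
    (hKprob : ∀ ω, IsProbabilityMeasure (K ω))
    (hKmeas : ∀ A : Set (PathSp S), MeasurableSet A →
      @Measurable _ _ (FstopNN τ) _ (fun ω => K ω A))
    (hKdis : ∀ A : Set (PathSp S), MeasurableSet A →
      ∀ Bs : Set (PathSp S), MemFstopNN τ Bs →
        Pfam x (A ∩ Bs) = ∫⁻ ω in Bs, K ω A ∂(Pfam x))
    (hKind : ∀ Bs : Set (PathSp S), MemFstopNN τ Bs →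
      ∀ᵐ ω ∂(Pfam x), K ω Bs = Bs.indicator (fun _ => (1 : ℝ≥0∞)) ω) :
    ∃ N : Set (PathSp S), MemFstopNN τ N ∧ Pfam x N = 0 ∧
      ∀ ω : PathSp S, ω ∉ N →
        Measure.map (shiftPath (τ ω)) (K ω) = Pfam ((ω (τ ω) : S → ℝ)) := by
  obtain ⟨hP, -, hPmp⟩ := hPfam x hx
  have hpair := (solvesMP_iff r m b (Pfam x)).1 hPmp
  obtain ⟨D, hDc, hDd⟩ := TopologicalSpace.exists_countable_dense ℝ≥0
  obtain ⟨C, hCc, hCpi, hCu, hCgen⟩ := exists_countable_piSystem (T := S)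
  obtain ⟨E, hEsub, hEc, hEd⟩ :=
    (TopologicalSpace.IsSeparable.of_separableSpace (pairSet r m b)).exists_countable_dense_subset
  have hCm : ∀ U ∈ C, MeasurableSet U := fun U hU =>
    hCgen.ge U (MeasurableSpace.measurableSet_generateFrom hU)
  have hθ := measurable_shift_tau hτ
  have hmart : ∀ᵐ ω ∂((Pfam x).trim (FstopNN_le hτ)), ∀ p ∈ E, ∀ s ∈ D, ∀ t ∈ D, ∀ U ∈ C,
      s ≤ t → ∫ ω', (stopP s ⁻¹' U).indicator (fun η => dynkin_s8 p t η - dynkin_s8 p s η)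
        (shiftPath (τ ω') ω') ∂(K ω) = 0 := by
    simp only [ae_ball_iff hEc, ae_ball_iff hDc, ae_ball_iff hCc]
    intro p hp s _ t _ U hU
    by_cases hst : s ≤ t
    swap
    · exact Filter.Eventually.of_forall fun ω h => absurd h hst
    have hA : MeasurableSet (stopP s ⁻¹' U) :=
      (measurable_stopP s).mono (filtr_le_s8 s) le_rfl (hCm U hU)
    have hd : Measurable fun η : PathSp S => dynkin_s8 p t η - dynkin_s8 p s η :=
      (continuous_dynkin_right p t).measurable.sub (continuous_dynkin_right p s).measurable
    refine (ae_integral_eq_zero hτ hKprob hKmeas hKdis ((hd.indicator hA).comp hθ)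
      (c := (1 + t) * ‖p‖ + (1 + s) * ‖p‖) (fun ω => ?_) (fun B hB => ?_)).mono fun _ h _ => h
    · exact (norm_indicator_le_norm_self _ _).trans ((abs_sub _ _).trans
        (add_le_add (abs_dynkin_le p t _) (abs_dynkin_le p s _)))
    · have hA' : MeasurableSet {ω : PathSp S | stopP s (shiftPath (τ ω) ω) ∈ U} := hθ hA
      have := integral_increment_eq_zero hτ (Pfam x) (hpair p (hEsub hp)) hst (hB.1.inter hA')
        (measurableSet_inter_shift hτ hB s (hCm U hU))
      rw [← setIntegral_indicator hA'] at this
      exact this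
  have hgood := (hmart.and (ae_eq_of_measurable_FstopNN hτ hKmeas hKind
    (measurable_tau_FstopNN hτ))).and (ae_eq_of_measurable_FstopNN hτ hKmeas hKind
    (measurable_eval_tau_FstopNN hτ))
  obtain ⟨N, hNsub, hNm, hN0⟩ := @exists_measurable_superset_of_null _ (FstopNN τ) _ _ (ae_iff.1 hgood)
  refine ⟨N, memFstop_of_measurableSet hτ hNm, ?_, fun ω hω => ?_⟩
  · rwa [trim_measurableSet_eq (FstopNN_le hτ) hNm] at hN0
  have hω' := not_not.1 fun h => hω (hNsub h)
  obtain ⟨⟨h1, h2⟩, h3⟩ := hω'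
  have hKω := hKprob ω
  -- Under `K ω` the time `τ` is frozen at `τ ω`, so the two shifts have the same law.
  have hmap : Measure.map (shiftPath (τ ω)) (K ω) =
      Measure.map (fun ω' => shiftPath (τ ω') ω') (K ω) :=
    Measure.map_congr (h2.mono fun ω' h => by simp only [h])
  rw [hmap]
  have hQ : IsProbabilityMeasure (Measure.map (fun ω' => shiftPath (τ ω') ω') (K ω)) :=
    Measure.isProbabilityMeasure_map hθ.aemeasurable
  refine huniq _ (ω (τ ω)).2 _ hQ ?_ ?_
  · have hc : Continuous fun η : PathSp S => (η 0 : S → ℝ) := by fun_prop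
    have hs : MeasurableSet {η : PathSp S | (η 0 : S → ℝ) = (ω (τ ω)).1} :=
      hc.measurable (measurableSet_singleton _)
    unfold StartsAt
    rw [Measure.map_apply hθ hs, ← measure_univ (μ := K ω)]
    refine measure_congr (Filter.eventuallyEq_univ.2 ?_)
    filter_upwards [h3] with ω' h
    simp [h]
    rfl
  · rw [solvesMP_iff]
    intro p hp
    refine mart_of_mem_closure _ (fun p hp => ?_) (hEd hp)
    refine mart_of_dense _ p hDd hCpi hCu hCgen fun s hs t ht hst U hU => ?_
    have hA : MeasurableSet (stopP s ⁻¹' U) :=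
      (measurable_stopP s).mono (filtr_le_s8 s) le_rfl (hCm U hU)
    have hd : Measurable fun η : PathSp S => dynkin_s8 p t η - dynkin_s8 p s η :=
      (continuous_dynkin_right p t).measurable.sub (continuous_dynkin_right p s).measurable
    rw [← integral_indicator hA, integral_map hθ.aemeasurable
      (hd.indicator hA).aestronglyMeasurable]
    exact h1 p hp s hs t ht U hU hst
end
end
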